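/- arXiv:1907.04636 — 2 statements merged into one kernel-verified Lean document; each statement's English description precedes it below -/
import Mathlib

section
/- Assume condition (R). Let Ψ_{γ,σ}(x;q) = x^{γ+1} λ_{γ,σ}(x;q) for real x>0, and let ξ_{γ,σ,n}(q) denote the n-th positive zero, in increasing order, of the derivative Ψ_{γ,σ}'(·;q). Then all zeros of Ψ_{γ,σ}'(·;q) are real, and the positive zeros of Ψ_{γ,σ}(·;q) and Ψ_{γ,σ}'(·;q) interlace: ξ_{γ,σ,1}(q) < ε_{γ,σ,1}(q) < ξ_{γ,σ,2}(q) < ε_{γ,σ,2}(q) < ⋯ . -/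
noncomputable def qPochInf (a q : ℝ) : ℝ := ∏' k : ℕ, (1 - a * q ^ k)

noncomputable def qGamma (q x : ℝ) : ℝ :=
  qPochInf q q * (1 - q) ^ (1 - x) / qPochInf (q ^ x) q

noncomputable def qML (γ σ q : ℝ) (z : ℂ) : ℂ :=
  ∑' n : ℕ,
    (((-1) ^ n * σ ^ (2 * n) * q ^ (n * (n - 1)) / qGamma q (2 * n + γ + 1) : ℝ) : ℂ) * z ^ (2 * n)

noncomputable def qMLR (γ σ q : ℝ) (x : ℝ) : ℝ :=
  ∑' n : ℕ,
    ((-1) ^ n * σ ^ (2 * n) * q ^ (n * (n - 1)) / qGamma q (2 * n + γ + 1)) * x ^ (2 * n)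

def condR (q γ : ℝ) : Prop :=
  (γ = 0 ∨ γ = 1) ∨
    (γ ∈ Set.Ioo (0 : ℝ) 2 ∧ γ ≠ 1 ∧
      1 < q⁻¹ * (1 - q) * (1 - q ^ (γ + 1)) * (1 - q ^ (γ + 2)))

noncomputable def radiusStarlike (α : ℝ) (f : ℂ → ℂ) : ℝ :=
  sSup {r : ℝ | 0 < r ∧ ∀ z : ℂ, 0 < ‖z‖ → ‖z‖ < r →
    α < (z * deriv f z / f z).re}

noncomputable def radiusConvex (α : ℝ) (f : ℂ → ℂ) : ℝ :=
  sSup {r : ℝ | 0 < r ∧ ∀ z : ℂ, ‖z‖ < r →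
    α < (1 + z * deriv (deriv f) z / deriv f z).re}

noncomputable def fML (γ σ q : ℝ) (z : ℂ) : ℂ :=
  Complex.exp ((1 / ((γ : ℂ) + 1)) *
    Complex.log (z ^ ((γ : ℂ) + 1) * (qGamma q (γ + 1) : ℂ) * qML γ σ q z))

noncomputable def gML (γ σ q : ℝ) (z : ℂ) : ℂ :=
  z * (qGamma q (γ + 1) : ℂ) * qML γ σ q z

noncomputable def hML (γ σ q : ℝ) (z : ℂ) : ℂ :=
  z * (qGamma q (γ + 1) : ℂ) *
    ∑' n : ℕ,
      (((-1) ^ n * σ ^ (2 * n) * q ^ (n * (n - 1)) / qGamma q (2 * n + γ + 1) : ℝ) : ℂ) * z ^ n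

noncomputable def hMLR (γ σ q : ℝ) (x : ℝ) : ℝ :=
  x * qGamma q (γ + 1) *
    ∑' n : ℕ,
      ((-1) ^ n * σ ^ (2 * n) * q ^ (n * (n - 1)) / qGamma q (2 * n + γ + 1)) * x ^ n

/-!
As a power series in `w = z²`, the `q`-Mittag-Leffler function is, up to a nonzero constant, a
locally uniform limit of real polynomials with positive roots that are separated by a fixed factor
`θ < 1`: consecutive roots satisfy `r_k ≤ θ r_{k+1}`. For `γ ∈ {0, 1}` these polynomials come from
the finite Euler product `∏ (1 - pᵏ w)`, `p = q²`, by `p`-difference operators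
`P ↦ P(w) - c P(pw)`, which preserve separation by the intermediate value theorem. In the remaining
case `p < 1 / 4`, the truncations of the series work, because at suitable points one of their
alternating terms dominates its neighbours (Hutchinson). Separation makes the reciprocal roots
converge along a subsequence, dominated by a geometric sequence, so the limit is a genus zero
product `K ∏ (1 - t_k z²)` with lacunary `t_k ≥ 0`.

For such a product the logarithmic derivative of `Ψ(z) = z^(γ+1) K ∏ (1 - t_k z²)` satisfies
`z Ψ'(z) / Ψ(z) = γ + 1 - ∑ 2 t_k z² / (1 - t_k z²)`. It has no non-real zeros, and on each interval
free of zeros of `Ψ` it is strictly decreasing, so `Ψ'` cannot vanish twice there; Rolle's theorem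
supplies the zeros of `Ψ'` between those of `Ψ`.
-/

section Products

open Filter Topology

/-- The canonical product `∏ (1 - t k z)` whose zeros are the reciprocals of the nonzero `t k`.
Zero entries of `t` contribute trivial factors, so finite products are included. It is taken over a
general field so that the restriction of the complex product to `ℝ` is again an instance. -/
noncomputable def rootProd {𝕜 : Type*} [RCLike 𝕜] (t : ℕ → ℝ) (z : 𝕜) : 𝕜 :=
  ∏' k, (1 - t k • z)

section Field

variable {𝕜 : Type*} [RCLike 𝕜] {t : ℕ → ℝ}

lemma summable_norm_neg_smul (ht : Summable t) (z : 𝕜) : Summable fun k => ‖-(t k • z)‖ := by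
  simpa only [norm_neg, norm_smul] using ht.norm.mul_right ‖z‖

lemma multipliable_one_sub_smul (ht : Summable t) (z : 𝕜) :
    Multipliable fun k => 1 - t k • z := by
  simpa only [sub_eq_add_neg] using multipliable_one_add_of_summable (summable_norm_neg_smul ht z)

lemma rootProd_eq_zero_iff (ht : Summable t) {z : 𝕜} :
    rootProd t z = 0 ↔ ∃ k, t k • z = 1 := by
  refine ⟨fun hz => ?_, fun ⟨k, hk⟩ => tprod_of_exists_eq_zero ⟨k, sub_eq_zero.2 hk.symm⟩⟩
  contrapose! hz
  simpa only [rootProd, sub_eq_add_neg] using tprod_one_add_ne_zero_of_summable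
    (fun k hk => hz k (by rw [← sub_eq_add_neg, sub_eq_zero] at hk; exact hk.symm))
    (summable_norm_neg_smul ht z)

lemma rootProd_smul (s : ℝ) (z : 𝕜) : rootProd (s • t) z = rootProd t (s • z) := by
  simp only [rootProd, Pi.smul_apply, smul_smul, smul_eq_mul, mul_comm]

lemma rootProd_eq_prod_of_eq_zero {N : ℕ} (ht : ∀ k, N ≤ k → t k = 0) (z : 𝕜) :
    rootProd t z = ∏ k ∈ Finset.range N, (1 - t k • z) :=
  tprod_eq_prod fun k hk => by
    rw [ht k (by simpa using hk), zero_smul, sub_zero]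

lemma rootProd_eq_mul_update (ht : Summable t) (k : ℕ) (z : 𝕜) :
    rootProd t z = (1 - t k • z) * rootProd (Function.update t k 0) z := by
  have hupdate : Function.update (fun j => 1 - t j • z) k 1 =
      fun j => 1 - Function.update t k 0 j • z := by
    ext j
    rcases eq_or_ne j k with rfl | hjk <;> simp [*]
  have hsplit := Multipliable.tprod_eq_mul_tprod_ite' (f := fun j => 1 - t j • z) k
    (hupdate ▸ multipliable_one_sub_smul (ht.update k 0) z)
  rw [rootProd, rootProd, hsplit, ← hupdate]
  exact congrArg _ (tprod_congr fun j => (Function.update_apply (fun j => 1 - t j • z) k 1 j).symm)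

lemma summable_smul_inv_one_sub_smul (ht : Summable t) (z : 𝕜) :
    Summable fun k => t k • (1 - t k • z)⁻¹ := by
  have hlim : Tendsto (fun k => ‖(1 - t k • z)⁻¹‖) atTop (𝓝 1) := by
    have := ((ht.tendsto_atTop_zero.smul_const z).const_sub 1).inv₀ (by simp)
    simpa using this.norm
  refine (ht.norm.mul_right 2).of_norm_bounded_eventually_nat ?_
  filter_upwards [hlim.eventually_le_const one_lt_two] with k hk
  rw [norm_smul]
  gcongr

end Field

section Complex

variable {t : ℕ → ℝ}

lemma multipliableLocallyUniformlyOn_one_sub_smul (ht : Summable t) (R : ℝ) :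
    MultipliableLocallyUniformlyOn (fun k (z : ℂ) => 1 - t k • z) (Metric.ball 0 R) := by
  simp only [sub_eq_add_neg]
  refine Summable.multipliableLocallyUniformlyOn_one_add Metric.isOpen_ball (ht.norm.mul_right R)
    (Eventually.of_forall fun k z hz => ?_) (fun k => by fun_prop)
  rw [norm_neg, norm_smul]
  gcongr
  exact (mem_ball_zero_iff.1 hz).le

lemma differentiable_rootProd (ht : Summable t) : Differentiable ℂ (rootProd (𝕜 := ℂ) t) := by
  intro z
  have hz : z ∈ Metric.ball (0 : ℂ) (‖z‖ + 1) := by simp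
  refine DifferentiableOn.differentiableAt ?_ (Metric.isOpen_ball.mem_nhds hz)
  exact (multipliableLocallyUniformlyOn_one_sub_smul ht
    (‖z‖ + 1)).hasProdLocallyUniformlyOn.differentiableOn
    (.of_forall fun _ => by
      simpa [Finset.prod_fn] using DifferentiableOn.finsetProd fun _ _ => by fun_prop)
    Metric.isOpen_ball

lemma logDeriv_rootProd (ht : Summable t) {z : ℂ} (hz : rootProd t z ≠ 0) :
    logDeriv (rootProd t) z = -∑' k, t k • (1 - t k • z)⁻¹ := by
  have hfactor (k : ℕ) : logDeriv (fun z : ℂ => 1 - t k • z) z = -(t k • (1 - t k • z)⁻¹) := by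
    have hd : HasDerivAt (fun z : ℂ => 1 - t k • z) (-(t k • 1)) z :=
      ((hasDerivAt_id z).const_smul (t k)).const_sub 1
    rw [logDeriv_apply, hd.deriv, div_eq_mul_inv, neg_mul, smul_one_mul]
  have hne (k : ℕ) : 1 - t k • z ≠ 0 := fun hk =>
    hz ((rootProd_eq_zero_iff ht).2 ⟨k, (sub_eq_zero.1 hk).symm⟩)
  have hlog := logDeriv_tprod_eq_tsum (s := Metric.ball (0 : ℂ) (‖z‖ + 1)) Metric.isOpen_ball
    (by simp) hne (fun k => by fun_prop)
    (by simpa only [hfactor] using (summable_smul_inv_one_sub_smul ht z).neg)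
    (multipliableLocallyUniformlyOn_one_sub_smul ht _) hz
  simp only [hfactor, tsum_neg] at hlog
  exact hlog

end Complex

section Real

variable {t : ℕ → ℝ}

lemma rootProd_ofReal (ht : Summable t) (x : ℝ) : rootProd t (x : ℂ) = (rootProd t x : ℝ) := by
  have hmap := (multipliable_one_sub_smul ht x).map_tprod Complex.ofRealHom
    Complex.continuous_ofReal
  simpa [rootProd] using hmap.symm

lemma differentiable_rootProd_real (ht : Summable t) :
    Differentiable ℝ (rootProd (𝕜 := ℝ) t) := fun x => by
  have hd := (differentiable_rootProd ht (x : ℂ)).hasDerivAt.real_of_complex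
  simp only [rootProd_ofReal ht, Complex.ofReal_re] at hd
  exact hd.differentiableAt

lemma deriv_rootProd_ofReal (ht : Summable t) (x : ℝ) :
    deriv (rootProd t) (x : ℂ) = (deriv (rootProd t) x : ℝ) := by
  have hd := (differentiable_rootProd ht (x : ℂ)).hasDerivAt.comp_ofReal
  simp only [rootProd_ofReal ht] at hd
  exact hd.unique (differentiable_rootProd_real ht x).hasDerivAt.ofReal_comp

lemma logDeriv_rootProd_real (ht : Summable t) {x : ℝ} (hx : rootProd t x ≠ 0) :
    logDeriv (rootProd t) x = -∑' k, t k * (1 - t k * x)⁻¹ := by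
  have hlog := logDeriv_rootProd ht (z := x) (by rw [rootProd_ofReal ht]; exact_mod_cast hx)
  rw [logDeriv_apply, deriv_rootProd_ofReal ht, rootProd_ofReal ht] at hlog
  apply Complex.ofReal_injective
  rw [logDeriv_apply]
  push_cast
  simpa using hlog

lemma deriv_rootProd_ne_zero (ht : Summable t) {x : ℝ} {k : ℕ} (hk : t k * x = 1)
    (hunique : ∀ j ≠ k, t j * x ≠ 1) : deriv (rootProd t) x ≠ 0 := by
  have hsum : Summable (Function.update t k 0) := ht.update k 0
  have hne : rootProd (Function.update t k 0) x ≠ 0 := by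
    rw [Ne, rootProd_eq_zero_iff hsum]
    rintro ⟨j, hj⟩
    rcases eq_or_ne j k with rfl | hjk
    · simp at hj
    · exact hunique j hjk (by simpa [hjk] using hj)
  have hfactor : rootProd t = (fun y : ℝ => 1 - t k * y) * rootProd (Function.update t k 0) :=
    funext (rootProd_eq_mul_update ht k)
  have hlin : HasDerivAt (fun y : ℝ => 1 - t k * y) (-t k) x := by
    simpa using ((hasDerivAt_id x).const_mul (t k)).const_sub 1
  have htk : t k ≠ 0 := left_ne_zero_of_mul_eq_one hk
  rw [hfactor, (hlin.mul (differentiable_rootProd_real hsum x).hasDerivAt).deriv]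
  simp [hk, htk, hne]

end Real

end Products

section LogarithmicDerivative

open Set

variable {t : ℕ → ℝ}

lemma hasSum_of_mul_rootProd_add_eq_zero (ht : Summable t) {κ W : ℂ} (hW : rootProd t W ≠ 0)
    (h : κ * rootProd t W + W * deriv (rootProd t) W = 0) :
    HasSum (fun k => W * (t k • (1 - t k • W)⁻¹)) κ := by
  have hlog : κ = -(W * logDeriv (rootProd t) W) := by
    rw [logDeriv_apply]
    field_simp
    linear_combination h
  rw [hlog, logDeriv_rootProd ht hW, mul_neg, neg_neg]
  exact (summable_smul_inv_one_sub_smul ht W).hasSum.mul_left W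

lemma hasSum_of_mul_rootProd_add_eq_zero_real (ht : Summable t) {κ x : ℝ}
    (hx : rootProd t x ≠ 0) (h : κ * rootProd t x + x * deriv (rootProd t) x = 0) :
    HasSum (fun k => x * (t k * (1 - t k * x)⁻¹)) κ := by
  have hlog : κ = -(x * logDeriv (rootProd t) x) := by
    rw [logDeriv_apply]
    field_simp
    linear_combination h
  rw [hlog, logDeriv_rootProd_real ht hx, mul_neg, neg_neg]
  exact (summable_smul_inv_one_sub_smul ht x).hasSum.mul_left x

lemma im_mul_smul_inv_one_sub_smul (s : ℝ) (W : ℂ) :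
    (W * (s • (1 - s • W)⁻¹)).im = s / Complex.normSq (1 - s • W) * W.im := by
  simp [Complex.inv_re, Complex.inv_im]
  ring

lemma re_mul_smul_inv_one_sub_smul (s : ℝ) (W : ℂ) :
    (W * (s • (1 - s • W)⁻¹)).re =
      s * (W.re - s * Complex.normSq W) / Complex.normSq (1 - s • W) := by
  simp [Complex.inv_re, Complex.inv_im, Complex.normSq_apply W]
  ring

lemma re_pos_and_im_eq_zero_of_mul_rootProd_add_eq_zero (ht : Summable t) (ht0 : ∀ k, 0 ≤ t k)
    {κ : ℝ} (hκ : 0 < κ) {W : ℂ} (h : κ * rootProd t W + W * deriv (rootProd t) W = 0) :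
    0 < W.re ∧ W.im = 0 := by
  by_cases hW : rootProd t W = 0
  · obtain ⟨k, hk⟩ := (rootProd_eq_zero_iff ht).1 hW
    have hre : t k * W.re = 1 := by simpa using congrArg Complex.re hk
    have him : t k * W.im = 0 := by simpa using congrArg Complex.im hk
    exact ⟨pos_of_mul_pos_right (hre ▸ one_pos) (ht0 k),
      (mul_eq_zero.1 him).resolve_left (left_ne_zero_of_mul_eq_one hre)⟩
  have hsum := hasSum_of_mul_rootProd_add_eq_zero ht hW h
  have hre := Complex.hasSum_re hsum
  have him := Complex.hasSum_im hsum
  simp only [re_mul_smul_inv_one_sub_smul, im_mul_smul_inv_one_sub_smul, Complex.ofReal_re,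
    Complex.ofReal_im] at hre him
  constructor
  · by_contra! hneg
    refine hκ.not_ge (hre.nonpos fun k => div_nonpos_of_nonpos_of_nonneg
      (mul_nonpos_of_nonneg_of_nonpos (ht0 k) ?_) (Complex.normSq_nonneg _))
    linarith [mul_nonneg (ht0 k) (Complex.normSq_nonneg W)]
  · by_contra hne
    have hsum0 : HasSum (fun k => t k / Complex.normSq (1 - t k • W)) 0 := by
      simpa [hne] using him.mul_right (W.im)⁻¹
    have hzero := (hasSum_zero_iff_of_nonneg fun k =>
      div_nonneg (ht0 k) (Complex.normSq_nonneg _)).1 hsum0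
    have ht_zero (k : ℕ) : t k * (W.re - t k * Complex.normSq W) /
        Complex.normSq (1 - t k • W) = 0 := by
      rw [mul_div_right_comm, congrFun hzero k, Pi.zero_apply, zero_mul]
    simp only [ht_zero] at hre
    exact hκ.ne (hasSum_zero.unique hre)

lemma one_sub_mul_pos_of_forall_mul_ne_one {s a b : ℝ} (h : ∀ c ∈ uIcc a b, s * c ≠ 1) :
    0 < (1 - s * a) * (1 - s * b) := by
  by_contra! hneg
  have hcont : ContinuousOn (fun c => 1 - s * c) (uIcc a b) := by fun_prop
  have hmem : (0 : ℝ) ∈ uIcc (1 - s * a) (1 - s * b) := by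
    rw [mem_uIcc]
    rcases mul_nonpos_iff.1 hneg with h | h
    exacts [.inr h.symm, .inl h]
  obtain ⟨c, hc, hc0⟩ := intermediate_value_uIcc hcont hmem
  exact h c hc (by linarith [show 1 - s * c = 0 from hc0])

lemma mul_inv_one_sub_sub_mul_inv_one_sub {s a b : ℝ} (h : 0 < (1 - s * a) * (1 - s * b)) :
    b * (s * (1 - s * b)⁻¹) - a * (s * (1 - s * a)⁻¹) =
      s * (b - a) / ((1 - s * a) * (1 - s * b)) := by
  have ha := left_ne_zero_of_mul h.ne'
  have hb := right_ne_zero_of_mul h.ne'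
  simp only [← div_eq_mul_inv, mul_div_assoc']
  rw [div_sub_div _ _ hb ha, mul_comm (1 - s * b) (1 - s * a)]
  congr 1
  ring

lemma exists_mem_Icc_rootProd_eq_zero (ht : Summable t) (ht0 : ∀ k, 0 ≤ t k) {κ : ℝ}
    (hκ : κ ≠ 0) {a b : ℝ} (hab : a < b) (ha : κ * rootProd t a + a * deriv (rootProd t) a = 0)
    (hb : κ * rootProd t b + b * deriv (rootProd t) b = 0) : ∃ c ∈ Icc a b, rootProd t c = 0 := by
  by_contra! hne
  have hsuma := hasSum_of_mul_rootProd_add_eq_zero_real ht (hne a (left_mem_Icc.2 hab.le)) ha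
  have hsumb := hasSum_of_mul_rootProd_add_eq_zero_real ht (hne b (right_mem_Icc.2 hab.le)) hb
  have hsame (k : ℕ) : 0 < (1 - t k * a) * (1 - t k * b) :=
    one_sub_mul_pos_of_forall_mul_ne_one fun c hc hk =>
      hne c (uIcc_of_le hab.le ▸ hc) ((rootProd_eq_zero_iff ht).2 ⟨k, hk⟩)
  have hdiff := hsumb.sub hsuma
  simp only [sub_self, mul_inv_one_sub_sub_mul_inv_one_sub (hsame _)] at hdiff
  have hzero := (hasSum_zero_iff_of_nonneg fun k =>
    div_nonneg (mul_nonneg (ht0 k) (sub_pos.2 hab).le) (hsame k).le).1 hdiff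
  have ht_zero (k : ℕ) : t k = 0 := by
    simpa [(hsame k).ne', (sub_pos.2 hab).ne'] using congrFun hzero k
  simp only [ht_zero, zero_mul, mul_zero] at hsuma
  exact hκ (hsuma.unique hasSum_zero)

lemma exists_mem_Ioo_rootProd_eq_zero (ht : Summable t) (ht0 : ∀ k, 0 ≤ t k)
    (hinj : ∀ j k, t j = t k → t k ≠ 0 → j = k) {κ : ℝ}
    (hκ : κ ≠ 0) {a b : ℝ} (hab : a < b) (ha : κ * rootProd t a + a * deriv (rootProd t) a = 0)
    (hb : κ * rootProd t b + b * deriv (rootProd t) b = 0) : ∃ c ∈ Ioo a b, rootProd t c = 0 := by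
  obtain ⟨c, ⟨hac, hcb⟩, hc⟩ := exists_mem_Icc_rootProd_eq_zero ht ht0 hκ hab ha hb
  obtain ⟨k, hk⟩ := (rootProd_eq_zero_iff ht).1 hc
  have hsimple : κ * rootProd t c + c * deriv (rootProd t) c ≠ 0 := by
    have hk0 := left_ne_zero_of_mul_eq_one hk
    have hc0 := right_ne_zero_of_mul_eq_one hk
    have hderiv := deriv_rootProd_ne_zero ht hk fun j hjk hj =>
      hjk (hinj j k (mul_right_cancel₀ hc0 (hj.trans hk.symm)) hk0)
    simp [hc, hc0, hderiv]
  exact ⟨c, ⟨hac.lt_of_ne fun h => hsimple (h ▸ ha), hcb.lt_of_ne fun h => hsimple (h ▸ hb)⟩, hc⟩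

end LogarithmicDerivative

section WeightedProduct

open Set

variable {t : ℕ → ℝ} {γ K : ℝ}

lemma deriv_cpow_mul_rootProd_sq (ht : Summable t) {z : ℂ} (hz : z ∈ Complex.slitPlane) :
    deriv (fun w : ℂ => w ^ ((γ : ℂ) + 1) * (K * rootProd t (w ^ 2))) z =
      2 * K * z ^ (γ : ℂ) * (((γ + 1) / 2 : ℝ) * rootProd t (z ^ 2) +
        z ^ 2 * deriv (rootProd t) (z ^ 2)) := by
  have hpow : HasDerivAt (fun w : ℂ => w ^ ((γ : ℂ) + 1)) (((γ : ℂ) + 1) * z ^ (γ : ℂ)) z := by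
    simpa using (hasDerivAt_id z).cpow_const (c := (γ : ℂ) + 1) hz
  have hprod : HasDerivAt (fun w : ℂ => rootProd t (w ^ 2))
      (deriv (rootProd t) (z ^ 2) * (2 * z)) z := by
    simpa [Function.comp_def] using
      (differentiable_rootProd ht (z ^ 2)).hasDerivAt.comp z (hasDerivAt_pow 2 z)
  rw [(hpow.fun_mul (hprod.const_mul (K : ℂ))).deriv,
    Complex.cpow_add _ _ (Complex.slitPlane_ne_zero hz), Complex.cpow_one]
  push_cast
  ring

lemma deriv_rpow_mul_rootProd_sq (ht : Summable t) {x : ℝ} (hx : x ≠ 0) :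
    deriv (fun x : ℝ => x ^ (γ + 1) * (K * rootProd t (x ^ 2))) x =
      2 * K * x ^ γ * ((γ + 1) / 2 * rootProd t (x ^ 2) +
        x ^ 2 * deriv (rootProd t) (x ^ 2)) := by
  have hpow : HasDerivAt (fun x : ℝ => x ^ (γ + 1)) ((γ + 1) * x ^ γ) x := by
    simpa using Real.hasDerivAt_rpow_const (p := γ + 1) (Or.inl hx)
  have hprod : HasDerivAt (fun x : ℝ => rootProd t (x ^ 2))
      (deriv (rootProd t) (x ^ 2) * (2 * x)) x := by
    simpa [Function.comp_def] using
      (differentiable_rootProd_real ht (x ^ 2)).hasDerivAt.comp x (hasDerivAt_pow 2 x)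
  rw [(hpow.fun_mul (hprod.const_mul K)).deriv, Real.rpow_add_one hx]
  ring

lemma im_eq_zero_of_deriv_cpow_mul_rootProd_sq (ht : Summable t) (ht0 : ∀ k, 0 ≤ t k)
    (hγ : -1 < γ) (hK : K ≠ 0) {z : ℂ}
    (hz : deriv (fun w : ℂ => w ^ ((γ : ℂ) + 1) * (K * rootProd t (w ^ 2))) z = 0) :
    z.im = 0 := by
  by_contra him
  have hz0 : z ≠ 0 := fun h => him (by simp [h])
  rw [deriv_cpow_mul_rootProd_sq ht (Or.inr him)] at hz
  have hzero := (mul_eq_zero.1 hz).resolve_left (by simp [hK, Complex.cpow_eq_zero_iff, hz0])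
  obtain ⟨hre, him_sq⟩ :=
    re_pos_and_im_eq_zero_of_mul_rootProd_add_eq_zero ht ht0 (by linarith) hzero
  have hre_eq : z.re = 0 := by
    have : z.re * z.im = 0 := by
      rw [pow_two, Complex.mul_im] at him_sq
      linarith
    exact (mul_eq_zero.1 this).resolve_right him
  simp only [pow_two, Complex.mul_re, hre_eq] at hre
  nlinarith [mul_self_nonneg z.im]

lemma exists_mem_Ioo_deriv_rpow_mul_rootProd_sq (ht : Summable t) (hγ : -1 ≤ γ) {a b : ℝ}
    (hab : a < b) (heq : a ^ (γ + 1) * (K * rootProd t (a ^ 2)) =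
      b ^ (γ + 1) * (K * rootProd t (b ^ 2))) :
    ∃ c ∈ Ioo a b, deriv (fun x : ℝ => x ^ (γ + 1) * (K * rootProd t (x ^ 2))) c = 0 := by
  have hpow : Continuous fun x : ℝ => x ^ (γ + 1) := Real.continuous_rpow_const (by linarith)
  have hprod := (differentiable_rootProd_real ht).continuous
  exact exists_deriv_eq_zero hab (by fun_prop) heq

lemma exists_mem_Ioo_rootProd_sq_eq_zero (ht : Summable t) (ht0 : ∀ k, 0 ≤ t k)
    (hinj : ∀ j k, t j = t k → t k ≠ 0 → j = k) (hγ : γ ≠ -1) (hK : K ≠ 0)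
    {a b : ℝ} (ha : 0 < a) (hab : a < b)
    (hda : deriv (fun x : ℝ => x ^ (γ + 1) * (K * rootProd t (x ^ 2))) a = 0)
    (hdb : deriv (fun x : ℝ => x ^ (γ + 1) * (K * rootProd t (x ^ 2))) b = 0) :
    ∃ c ∈ Ioo a b, rootProd t (c ^ 2) = 0 := by
  have hzero {x : ℝ} (hx : 0 < x)
      (hdx : deriv (fun x : ℝ => x ^ (γ + 1) * (K * rootProd t (x ^ 2))) x = 0) :
      (γ + 1) / 2 * rootProd t (x ^ 2) + x ^ 2 * deriv (rootProd t) (x ^ 2) = 0 := by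
    rw [deriv_rpow_mul_rootProd_sq ht hx.ne'] at hdx
    exact (mul_eq_zero.1 hdx).resolve_left (by have := Real.rpow_pos_of_pos hx γ; positivity)
  obtain ⟨c, ⟨hac, hcb⟩, hc⟩ := exists_mem_Ioo_rootProd_eq_zero ht ht0 hinj
    (div_ne_zero (by rwa [← sub_neg_eq_add, sub_ne_zero]) two_ne_zero)
    (pow_lt_pow_left₀ hab ha.le two_ne_zero) (hzero ha hda) (hzero (ha.trans hab) hdb)
  refine ⟨√c, ⟨Real.lt_sqrt_of_sq_lt hac, (Real.sqrt_lt' (ha.trans hab)).2 hcb⟩, ?_⟩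
  rwa [Real.sq_sqrt ((sq_nonneg a).trans hac.le)]

end WeightedProduct

section Interlacing

open Set

lemma interlacing_of_exists_mem_Ioo {α : Type*} [LinearOrder α] {ε ξ : ℕ → α} (hε : StrictMono ε)
    (hξ : StrictMono ξ) (h0 : ∃ m, ξ m < ε 0)
    (hε_gap : ∀ n, ∃ m, ξ m ∈ Ioo (ε n) (ε (n + 1)))
    (hξ_gap : ∀ n, ∃ m, ε m ∈ Ioo (ξ n) (ξ (n + 1))) (n : ℕ) :
    ξ n < ε n ∧ ε n < ξ (n + 1) := by
  induction n with
  | zero =>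
    obtain ⟨m, hm⟩ := h0
    obtain ⟨k, -, hk⟩ := hξ_gap 0
    exact ⟨(hξ.monotone m.zero_le).trans_lt hm, (hε.monotone k.zero_le).trans_lt hk⟩
  | succ n ih =>
    obtain ⟨m, hnm, hm⟩ := hε_gap n
    obtain ⟨k, hnk, hk⟩ := hξ_gap (n + 1)
    have hm_le : n + 1 ≤ m := hξ.lt_iff_lt.1 (ih.1.trans hnm)
    have hk_le : n + 1 ≤ k := hε.lt_iff_lt.1 (ih.2.trans hnk)
    exact ⟨(hξ.monotone hm_le).trans_lt hm, (hε.monotone hk_le).trans_lt hk⟩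

end Interlacing

section Lacunary

open Filter Topology

/-- A nonnegative sequence decaying at least geometrically with ratio `θ`. The reciprocals of
its nonzero entries are the zeros of `rootProd`; zero entries are allowed so that finitely many
zeros, and limits in which zeros escape to infinity, are covered. -/
structure IsLacunary (θ : ℝ) (t : ℕ → ℝ) : Prop where
  nonneg (k : ℕ) : 0 ≤ t k
  succ_le (k : ℕ) : t (k + 1) ≤ θ * t k

namespace IsLacunary

variable {θ : ℝ} {t : ℕ → ℝ}

lemma le_mul_pow (ht : IsLacunary θ t) (hθ : 0 ≤ θ) (k : ℕ) : t k ≤ t 0 * θ ^ k := by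
  induction k with
  | zero => simp
  | succ k ih =>
    calc t (k + 1) ≤ θ * t k := ht.succ_le k
      _ ≤ θ * (t 0 * θ ^ k) := by gcongr
      _ = t 0 * θ ^ (k + 1) := by ring

lemma summable (ht : IsLacunary θ t) (hθ0 : 0 ≤ θ) (hθ1 : θ < 1) : Summable t :=
  .of_nonneg_of_le ht.nonneg (ht.le_mul_pow hθ0) ((summable_geometric_of_lt_one hθ0 hθ1).mul_left _)

lemma antitone (ht : IsLacunary θ t) (hθ : θ ≤ 1) : Antitone t :=
  antitone_nat_of_succ_le fun k =>
    (ht.succ_le k).trans (mul_le_of_le_one_left (ht.nonneg k) hθ)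

lemma le_mul_of_lt (ht : IsLacunary θ t) (hθ : θ ≤ 1) {j k : ℕ} (hjk : j < k) :
    t k ≤ θ * t j :=
  (ht.antitone hθ hjk).trans (ht.succ_le j)

lemma lt_of_lt (ht : IsLacunary θ t) (hθ : θ < 1) {j k : ℕ} (hjk : j < k) (hj : 0 < t j) :
    t k < t j :=
  (ht.le_mul_of_lt hθ.le hjk).trans_lt (mul_lt_of_lt_one_left hj hθ)

lemma eq_of_apply_eq (ht : IsLacunary θ t) (hθ : θ < 1) (j k : ℕ) (h : t j = t k)
    (hk : t k ≠ 0) : j = k := by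
  have hk_pos := (ht.nonneg k).lt_of_ne' hk
  rcases lt_trichotomy j k with hjk | hjk | hjk
  · exact absurd h (ht.lt_of_lt hθ hjk (h ▸ hk_pos)).ne'
  · exact hjk
  · exact absurd h (ht.lt_of_lt hθ hjk hk_pos).ne

lemma smul (ht : IsLacunary θ t) {s : ℝ} (hs : 0 ≤ s) : IsLacunary θ (s • t) where
  nonneg k := mul_nonneg hs (ht.nonneg k)
  succ_le k := by
    simpa only [Pi.smul_apply, smul_eq_mul, mul_left_comm] using
      mul_le_mul_of_nonneg_left (ht.succ_le k) hs

lemma one_add_le_rootProd_neg_one (ht : IsLacunary θ t) (hθ0 : 0 ≤ θ) (hθ1 : θ < 1) :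
    1 + t 0 ≤ rootProd t (-1 : ℝ) := by
  have hsum := ht.summable hθ0 hθ1
  have hrest : 1 ≤ rootProd (Function.update t 0 0) (-1 : ℝ) := by
    refine le_hasProd_of_le_prod (multipliable_one_sub_smul (hsum.update 0 0) (-1)).hasProd
      fun s => s.one_le_prod fun k _ => ?_
    rcases eq_or_ne k 0 with rfl | hk
    · simp
    · simpa [hk] using ht.nonneg k
  rw [rootProd_eq_mul_update hsum 0, smul_eq_mul, mul_neg_one, sub_neg_eq_add]
  exact le_mul_of_one_le_right (by linarith [ht.nonneg 0]) hrest

lemma exists_tendsto_subseq {t : ℕ → ℕ → ℝ} (ht : ∀ N, IsLacunary θ (t N)) (hθ : θ ≤ 1)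
    {B : ℝ} (hB : ∀ N, t N 0 ≤ B) :
    ∃ s, IsLacunary θ s ∧ ∃ φ : ℕ → ℕ, StrictMono φ ∧ Tendsto (t ∘ φ) atTop (𝓝 s) := by
  have hcompact : IsCompact (Set.univ.pi fun _ : ℕ => Set.Icc (0 : ℝ) B) :=
    isCompact_univ_pi fun _ => isCompact_Icc
  obtain ⟨s, hs, φ, hφ, hlim⟩ := hcompact.tendsto_subseq (x := t) fun N k _ =>
    ⟨(ht N).nonneg k, ((ht N).antitone hθ k.zero_le).trans (hB N)⟩
  have hlim_apply := tendsto_pi_nhds.1 hlim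
  refine ⟨s, ⟨fun k => (hs k trivial).1, fun k => ?_⟩, φ, hφ, hlim⟩
  exact le_of_tendsto_of_tendsto' (hlim_apply (k + 1)) ((hlim_apply k).const_mul θ)
    fun n => (ht (φ n)).succ_le k

lemma tendsto_rootProd {t : ℕ → ℕ → ℝ} {s : ℕ → ℝ} (ht : ∀ N, IsLacunary θ (t N)) (hθ0 : 0 ≤ θ)
    (hθ1 : θ < 1) {B : ℝ} (hB : ∀ N, t N 0 ≤ B) (hlim : Tendsto t atTop (𝓝 s)) (w : ℂ) :
    Tendsto (fun N => rootProd (t N) w) atTop (𝓝 (rootProd s w)) := by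
  simp only [rootProd, sub_eq_add_neg]
  refine tendsto_tprod_one_add_of_dominated_convergence (bound := fun k => B * θ ^ k * ‖w‖)
    (((summable_geometric_of_lt_one hθ0 hθ1).mul_left B).mul_right ‖w‖)
    (fun k => ((tendsto_pi_nhds.1 hlim k).smul_const w).neg) (.of_forall fun N k => ?_)
  rw [norm_neg, norm_smul, Real.norm_of_nonneg ((ht N).nonneg k)]
  gcongr
  exact ((ht N).le_mul_pow hθ0 k).trans (by gcongr; exact hB N)

lemma exists_eq_rootProd_of_tendsto {t : ℕ → ℕ → ℝ} (ht : ∀ N, IsLacunary θ (t N)) (hθ0 : 0 ≤ θ)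
    (hθ1 : θ < 1) {F : ℂ → ℂ} (hF : ∀ w, Tendsto (fun N => rootProd (t N) w) atTop (𝓝 (F w))) :
    ∃ s, IsLacunary θ s ∧ ∀ w, F w = rootProd s w := by
  obtain ⟨B, hB⟩ := (hF (-1)).norm.bddAbove_range
  have hbound (N : ℕ) : t N 0 ≤ B := by
    have hreal := rootProd_ofReal ((ht N).summable hθ0 hθ1) (-1)
    rw [Complex.ofReal_neg, Complex.ofReal_one] at hreal
    calc t N 0 ≤ 1 + t N 0 := by linarith
      _ ≤ rootProd (t N) (-1 : ℝ) := (ht N).one_add_le_rootProd_neg_one hθ0 hθ1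
      _ ≤ ‖rootProd (t N) (-1 : ℂ)‖ := by
        rw [hreal, Complex.norm_real]
        exact Real.le_norm_self _
      _ ≤ B := hB ⟨N, rfl⟩
  obtain ⟨s, hs, φ, hφ, hlim⟩ := exists_tendsto_subseq ht hθ1.le hbound
  exact ⟨s, hs, fun w => tendsto_nhds_unique ((hF w).comp hφ.tendsto_atTop)
    (tendsto_rootProd (fun n => ht (φ n)) hθ0 hθ1 (fun n => hbound (φ n)) hlim w)⟩

end IsLacunary

end Lacunary

section SeparatedRoots

open Polynomial

lemma natDegree_prod_one_sub_C_mul_X_le {R ι : Type*} [CommRing R] (s : Finset ι) (f : ι → R) :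
    (∏ i ∈ s, (1 - C (f i) * X)).natDegree ≤ s.card := by
  refine (natDegree_prod_le _ _).trans ((Finset.sum_le_card_nsmul s _ 1 fun i _ => ?_).trans_eq
    (by simp))
  compute_degree

lemma eq_C_mul_prod_of_eval_eq_zero {F : Type*} [Field F] {P : F[X]} {s : Finset F} (h0 : 0 ∉ s)
    (hdeg : P.natDegree ≤ s.card) (hs : ∀ x ∈ s, P.eval x = 0) :
    P = C (P.eval 0) * ∏ x ∈ s, (1 - C x⁻¹ * X) := by
  classical
  refine eq_of_natDegree_lt_card_of_eval_eq' _ _ (insert 0 s) (fun x hx => ?_) ?_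
  · rcases Finset.mem_insert.1 hx with rfl | hx
    · simp [eval_prod]
    · have hx0 : x ≠ 0 := ne_of_mem_of_not_mem hx h0
      rw [hs x hx, eval_mul, eval_prod, Finset.prod_eq_zero hx (by simp [hx0]), mul_zero]
  · rw [Finset.card_insert_of_notMem h0, Nat.lt_succ_iff]
    exact max_le hdeg ((natDegree_C_mul_le _ _).trans (natDegree_prod_one_sub_C_mul_X_le s _))

/-- `P` has degree `N`, constant term `1` and positive roots `r₀ < r₁ < ⋯ < r_{N-1}` with
`r_k ≤ θ r_{k+1}`; the witness `t` lists the reciprocals of these roots, padded with zeros, so that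
`P` is an instance of `rootProd`. -/
def HasSeparatedRoots (θ : ℝ) (N : ℕ) (P : ℝ[X]) : Prop :=
  ∃ t, IsLacunary θ t ∧ (∀ k, 0 < t k ↔ k < N) ∧ P = ∏ k ∈ Finset.range N, (1 - C (t k) * X)

lemma HasSeparatedRoots.natDegree_le {θ : ℝ} {N : ℕ} {P : ℝ[X]} (hP : HasSeparatedRoots θ N P) :
    P.natDegree ≤ N := by
  obtain ⟨t, -, -, rfl⟩ := hP
  exact (natDegree_prod_one_sub_C_mul_X_le _ t).trans_eq (Finset.card_range N)

lemma HasSeparatedRoots.exists_aeval_eq_rootProd {θ : ℝ} {N : ℕ} {P : ℝ[X]}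
    (hP : HasSeparatedRoots θ N P) :
    ∃ t, IsLacunary θ t ∧ ∀ w : ℂ, aeval w P = rootProd t w := by
  obtain ⟨t, ht, hpos, rfl⟩ := hP
  refine ⟨t, ht, fun w => ?_⟩
  rw [rootProd_eq_prod_of_eq_zero fun k hk =>
    le_antisymm (not_lt.1 ((hpos k).not.2 hk.not_gt)) (ht.nonneg k)]
  simp [map_prod]

lemma hasSeparatedRoots_of_eval_eq_zero {θ : ℝ} (hθ0 : 0 ≤ θ) (hθ1 : θ < 1) {N : ℕ} {P : ℝ[X]}
    (hdeg : P.natDegree ≤ N) (h0 : P.eval 0 = 1) {r : ℕ → ℝ} (hr : ∀ k < N, 0 < r k)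
    (hsep : ∀ k, k + 1 < N → r k ≤ θ * r (k + 1)) (hzero : ∀ k < N, P.eval (r k) = 0) :
    HasSeparatedRoots θ N P := by
  set t : ℕ → ℝ := fun k => if k < N then (r k)⁻¹ else 0 with ht_def
  have ht_of_lt {k : ℕ} (hk : k < N) : t k = (r k)⁻¹ := if_pos hk
  have hpos (k : ℕ) : 0 < t k ↔ k < N := by
    by_cases hk : k < N <;> simp [ht_def, hk, hr]
  have ht : IsLacunary θ t := by
    refine ⟨fun k => ?_, fun k => ?_⟩
    · by_cases hk : k < N
      exacts [((hpos k).2 hk).le, (if_neg hk).ge]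
    · by_cases hk : k + 1 < N
      · rw [ht_of_lt hk, ht_of_lt (k.lt_succ_self.trans hk), inv_le_iff_one_le_mul₀ (hr _ hk),
          mul_right_comm, ← div_eq_mul_inv, one_le_div (hr _ (k.lt_succ_self.trans hk))]
        exact hsep k hk
      · rw [show t (k + 1) = 0 from if_neg hk]
        refine mul_nonneg hθ0 ?_
        by_cases hk' : k < N
        exacts [((hpos k).2 hk').le, (if_neg hk').ge]
  have hinj : Set.InjOn r (Finset.range N) := fun j hj k hk hjk => by
    have hj := Finset.mem_range.1 hj
    have hk := Finset.mem_range.1 hk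
    exact ht.eq_of_apply_eq hθ1 j k (by rw [ht_of_lt hj, ht_of_lt hk, hjk]) ((hpos k).2 hk).ne'
  refine ⟨t, ht, hpos, ?_⟩
  rw [eq_C_mul_prod_of_eval_eq_zero (P := P) (s := (Finset.range N).image r), h0, C_1, one_mul,
    Finset.prod_image hinj]
  · exact Finset.prod_congr rfl fun k hk => by rw [ht_of_lt (Finset.mem_range.1 hk)]
  · simpa using fun k hk => (hr k hk).ne'
  · rwa [Finset.card_image_of_injOn hinj, Finset.card_range]
  · simpa using hzero

lemma hasSeparatedRoots_of_sign_changes {θ : ℝ} (hθ0 : 0 ≤ θ) (hθ1 : θ < 1) {N : ℕ} {P : ℝ[X]}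
    (hdeg : P.natDegree ≤ N) (h0 : P.eval 0 = 1) {a : ℕ → ℝ} (ha0 : ∀ k < N, 0 ≤ a k)
    (ha : ∀ k < N, a k ≤ θ * a (k + 1)) (hleft : ∀ k < N, 0 ≤ (-1) ^ k * P.eval (a k))
    (hright : ∀ k < N, (-1) ^ k * P.eval (θ * a (k + 1)) ≤ 0) : HasSeparatedRoots θ N P := by
  have hroot (k : ℕ) (hk : k < N) : ∃ r ∈ Set.Icc (a k) (θ * a (k + 1)), P.eval r = 0 := by
    have hcont : ContinuousOn (fun x => (-1) ^ k * P.eval x) (Set.Icc (a k) (θ * a (k + 1))) := by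
      fun_prop
    obtain ⟨r, hr, hr0⟩ := intermediate_value_Icc' (ha k hk) hcont ⟨hright k hk, hleft k hk⟩
    exact ⟨r, hr, by simpa using hr0⟩
  choose! r hr hr0 using hroot
  refine hasSeparatedRoots_of_eval_eq_zero hθ0 hθ1 hdeg h0 (r := r) (fun k hk => ?_)
    (fun k hk => ?_) hr0
  · refine ((ha0 k hk).trans (hr k hk).1).lt_of_ne fun h => ?_
    have hroot0 := hr0 k hk
    rw [← h, h0] at hroot0
    exact one_ne_zero hroot0
  · exact (hr k (k.lt_succ_self.trans hk)).2.trans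
      (mul_le_mul_of_nonneg_left (hr (k + 1) hk).1 hθ0)

lemma neg_one_pow_mul_prod_one_sub_nonneg {t : ℕ → ℝ} {k N : ℕ} (hk : k ≤ N) {x : ℝ}
    (hlow : ∀ j < k, 1 ≤ t j * x) (hhigh : ∀ j ≥ k, t j * x ≤ 1) :
    0 ≤ (-1) ^ k * ∏ j ∈ Finset.range N, (1 - t j * x) := by
  obtain ⟨m, rfl⟩ := Nat.exists_eq_add_of_le hk
  have hsign : (-1) ^ k * ∏ j ∈ Finset.range k, (1 - t j * x) =
      ∏ j ∈ Finset.range k, (t j * x - 1) := by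
    simpa using (Finset.prod_neg (s := Finset.range k) (f := fun j => 1 - t j * x)).symm
  rw [Finset.prod_range_add, ← mul_assoc, hsign]
  refine mul_nonneg (Finset.prod_nonneg fun j hj => ?_) (Finset.prod_nonneg fun j _ => ?_)
  · linarith [hlow j (Finset.mem_range.1 hj)]
  · linarith [hhigh (k + j) (k.le_add_right j)]

namespace IsLacunary

variable {θ : ℝ} {t : ℕ → ℝ} {k N : ℕ} {x : ℝ}

lemma neg_one_pow_mul_prod_nonneg (ht : IsLacunary θ t) (hθ0 : 0 < θ) (hθ1 : θ ≤ 1) (hk : k ≤ N)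
    (hx : 0 ≤ x) (hlow : θ ≤ t k * x) (hhigh : t k * x ≤ 1) :
    0 ≤ (-1) ^ k * ∏ j ∈ Finset.range N, (1 - t j * x) := by
  refine neg_one_pow_mul_prod_one_sub_nonneg hk (fun j hj => ?_) fun j hj => ?_
  · have hle := mul_le_mul_of_nonneg_right (ht.le_mul_of_lt hθ1 hj) hx
    exact le_of_mul_le_mul_left (by linarith) hθ0
  · exact (mul_le_mul_of_nonneg_right (ht.antitone hθ1 hj) hx).trans hhigh

lemma neg_one_pow_succ_mul_prod_nonneg (ht : IsLacunary θ t) (hθ1 : θ ≤ 1) (hk : k < N)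
    (hx : 0 ≤ x) (hlow : 1 ≤ t k * x) (hhigh : θ * (t k * x) ≤ 1) :
    0 ≤ (-1) ^ (k + 1) * ∏ j ∈ Finset.range N, (1 - t j * x) := by
  refine neg_one_pow_mul_prod_one_sub_nonneg hk (fun j hj => ?_) fun j hj => ?_
  · exact hlow.trans (mul_le_mul_of_nonneg_right (ht.antitone hθ1 (Nat.lt_succ_iff.1 hj)) hx)
  · have hle := mul_le_mul_of_nonneg_right (ht.le_mul_of_lt hθ1 hj) hx
    linarith

end IsLacunary

/-- The normalised `p`-difference operator `P ↦ (P(X) - c P(pX)) / (1 - c)`, which fixes constant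
terms and multiplies the `n`-th coefficient by `(1 - c pⁿ) / (1 - c)`. -/
noncomputable def dilationDiff (c p : ℝ) (P : ℝ[X]) : ℝ[X] :=
  C (1 - c)⁻¹ * (P - C c * P.comp (C p * X))

lemma eval_dilationDiff (c p : ℝ) (P : ℝ[X]) (x : ℝ) :
    (dilationDiff c p P).eval x = (1 - c)⁻¹ * (P.eval x - c * P.eval (p * x)) := by
  simp [dilationDiff]

lemma coeff_dilationDiff (c p : ℝ) (P : ℝ[X]) (n : ℕ) :
    (dilationDiff c p P).coeff n = (1 - c * p ^ n) / (1 - c) * P.coeff n := by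
  simp only [dilationDiff, coeff_C_mul, coeff_sub, comp_C_mul_X_coeff]
  ring

lemma natDegree_dilationDiff_le (c p : ℝ) (P : ℝ[X]) :
    (dilationDiff c p P).natDegree ≤ P.natDegree :=
  natDegree_le_iff_coeff_eq_zero.2 fun n hn => by
    rw [coeff_dilationDiff, coeff_eq_zero_of_natDegree_lt hn, mul_zero]

lemma HasSeparatedRoots.dilationDiff {c p : ℝ} (hc0 : 0 ≤ c) (hc1 : c < 1) (hp0 : 0 < p)
    (hp1 : p < 1) {N : ℕ} {P : ℝ[X]} (hP : HasSeparatedRoots p N P) :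
    HasSeparatedRoots p N (dilationDiff c p P) := by
  have hdeg := (natDegree_dilationDiff_le c p P).trans hP.natDegree_le
  obtain ⟨t, ht, hpos, rfl⟩ := hP
  set P := ∏ k ∈ Finset.range N, (1 - C (t k) * X) with hP
  have heval (x : ℝ) : P.eval x = ∏ k ∈ Finset.range N, (1 - t k * x) := by simp [hP, eval_prod]
  have hroot {k : ℕ} (hk : k < N) : P.eval (t k)⁻¹ = 0 := by
    rw [heval]
    exact Finset.prod_eq_zero (Finset.mem_range.2 hk) (by simp [((hpos k).2 hk).ne'])
  have hc : 0 < (1 - c)⁻¹ := inv_pos.2 (sub_pos.2 hc1)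
  have h0 : (_root_.dilationDiff c p P).eval 0 = 1 := by
    rw [eval_dilationDiff, mul_zero, heval]
    simp [(sub_pos.2 hc1).ne']
  have hcancel (k : ℕ) : p * (p * t k)⁻¹ = (t k)⁻¹ := by
    rw [mul_inv, mul_inv_cancel_left₀ hp0.ne']
  refine hasSeparatedRoots_of_sign_changes hp0.le hp1 hdeg h0
    (a := fun | 0 => 0 | k + 1 => (p * t k)⁻¹) ?_ ?_ ?_ fun k hk => ?_
  · rintro (_ | k) -
    exacts [le_rfl, inv_nonneg.2 (mul_nonneg hp0.le (ht.nonneg k))]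
  · rintro (_ | k) hk <;> simp only [hcancel]
    · exact inv_nonneg.2 (ht.nonneg 0)
    · exact inv_anti₀ ((hpos _).2 hk) (ht.succ_le k)
  · rintro (_ | k) hk
    · simp [h0]
    have hk' := k.lt_succ_self.trans hk
    have htk : t k * (p * t k)⁻¹ = p⁻¹ := by
      rw [mul_inv, mul_left_comm, mul_inv_cancel₀ ((hpos k).2 hk').ne', mul_one]
    rw [eval_dilationDiff, hcancel, hroot hk', mul_zero, sub_zero, mul_left_comm, heval]
    refine mul_nonneg hc.le (ht.neg_one_pow_succ_mul_prod_nonneg hp1.le hk'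
      (inv_nonneg.2 (mul_nonneg hp0.le (ht.nonneg k))) ?_ ?_) <;> rw [htk]
    exacts [(one_le_inv₀ hp0).2 hp1.le, (mul_inv_cancel₀ hp0.ne').le]
  · have htk : t k * (p * (t k)⁻¹) = p := by
      rw [mul_left_comm, mul_inv_cancel₀ ((hpos k).2 hk).ne', mul_one]
    have hsign := ht.neg_one_pow_mul_prod_nonneg hp0 hp1.le hk.le
      (mul_nonneg hp0.le (inv_nonneg.2 (ht.nonneg k))) htk.ge (htk.trans_le hp1.le)
    simp only [hcancel, eval_dilationDiff, hroot hk]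
    rw [← heval] at hsign
    linarith [mul_nonneg (mul_nonneg hc.le hc0) hsign]

end SeparatedRoots

section RatioCoeff

open Filter Topology Polynomial

/-- The coefficients of the power series with constant term `1` whose consecutive coefficients
have quotients `-ρ 0, -ρ 1, …`. -/
noncomputable def ratioCoeff (ρ : ℕ → ℝ) (n : ℕ) : ℝ := ∏ i ∈ Finset.range n, -ρ i

@[simp]
lemma ratioCoeff_zero (ρ : ℕ → ℝ) : ratioCoeff ρ 0 = 1 := Finset.prod_range_zero _

lemma ratioCoeff_succ (ρ : ℕ → ℝ) (n : ℕ) : ratioCoeff ρ (n + 1) = -ρ n * ratioCoeff ρ n := by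
  rw [ratioCoeff, Finset.prod_range_succ_comm, ratioCoeff]

lemma eq_mul_ratioCoeff {a ρ : ℕ → ℝ} (h : ∀ n, a (n + 1) = -ρ n * a n) (n : ℕ) :
    a n = a 0 * ratioCoeff ρ n := by
  induction n with
  | zero => simp
  | succ n ih => rw [h, ih, ratioCoeff_succ, mul_left_comm]

lemma ratioCoeff_smul (s : ℝ) (ρ : ℕ → ℝ) (n : ℕ) :
    ratioCoeff (s • ρ) n = ratioCoeff ρ n * s ^ n := by
  simp [ratioCoeff, ← mul_neg, Finset.prod_mul_distrib, mul_comm]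

lemma ratioCoeff_eq_neg_one_pow_mul (ρ : ℕ → ℝ) (n : ℕ) :
    ratioCoeff ρ n = (-1) ^ n * ∏ i ∈ Finset.range n, ρ i := by
  rw [ratioCoeff, Finset.prod_neg, Finset.card_range]

lemma abs_ratioCoeff_le {ρ ρ' : ℕ → ℝ} {n : ℕ} (h : ∀ i < n, |ρ i| ≤ ρ' i) :
    |ratioCoeff ρ n| ≤ |ratioCoeff ρ' n| := by
  simp only [ratioCoeff, Finset.abs_prod, abs_neg]
  exact Finset.prod_le_prod (fun _ _ => abs_nonneg _) fun i hi =>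
    (h i (Finset.mem_range.1 hi)).trans (le_abs_self _)

lemma tendsto_ratioCoeff {ι : Type*} {l : Filter ι} {ρ : ι → ℕ → ℝ} {ρ' : ℕ → ℝ}
    (h : ∀ i, Tendsto (fun j => ρ j i) l (𝓝 (ρ' i))) (n : ℕ) :
    Tendsto (fun j => ratioCoeff (ρ j) n) l (𝓝 (ratioCoeff ρ' n)) :=
  tendsto_finsetProd _ fun i _ => (h i).neg

lemma summable_abs_ratioCoeff_mul_pow {ρ : ℕ → ℝ} (hρ : Tendsto ρ atTop (𝓝 0)) (r : ℝ) :
    Summable fun n => |ratioCoeff ρ n| * r ^ n := by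
  have hlim : Tendsto (fun n => |ρ n| * |r|) atTop (𝓝 0) := by simpa using hρ.abs.mul_const |r|
  refine summable_of_ratio_norm_eventually_le (r := 1 / 2) (by norm_num) ?_
  filter_upwards [hlim.eventually_le_const one_half_pos] with n hn
  calc ‖|ratioCoeff ρ (n + 1)| * r ^ (n + 1)‖
      = |ρ n| * |r| * ‖|ratioCoeff ρ n| * r ^ n‖ := by
        simp only [ratioCoeff_succ, Real.norm_eq_abs, abs_mul, abs_neg, abs_abs, abs_pow]
        ring
    _ ≤ 1 / 2 * ‖|ratioCoeff ρ n| * r ^ n‖ := by gcongr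

lemma exists_tsum_eq_rootProd_of_tendsto_coeff {θ : ℝ} (hθ0 : 0 ≤ θ) (hθ1 : θ < 1)
    {P : ℕ → ℝ[X]} {d : ℕ → ℕ} (hP : ∀ N, HasSeparatedRoots θ (d N) (P N)) {a b : ℕ → ℝ}
    (hlim : ∀ n, Tendsto (fun N => (P N).coeff n) atTop (𝓝 (a n)))
    (hle : ∀ N n, |(P N).coeff n| ≤ b n) (hb : ∀ r : ℝ, Summable fun n => b n * r ^ n) :
    ∃ t, IsLacunary θ t ∧ ∀ w : ℂ, ∑' n, a n • w ^ n = rootProd t w := by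
  choose t ht hPt using fun N => (hP N).exists_aeval_eq_rootProd
  refine IsLacunary.exists_eq_rootProd_of_tendsto ht hθ0 hθ1 fun w => ?_
  have haeval (N : ℕ) : ∑' n, (P N).coeff n • w ^ n = rootProd (t N) w := by
    rw [← hPt, aeval_eq_sum_range]
    refine tsum_eq_sum fun n hn => ?_
    rw [coeff_eq_zero_of_natDegree_lt (by simpa [Nat.lt_succ_iff] using hn), zero_smul]
  simp only [← haeval]
  refine tendsto_tsum_of_dominated_convergence (hb ‖w‖) (fun n => (hlim n).smul_const _)
    (.of_forall fun N n => ?_)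
  rw [norm_smul, norm_pow, Real.norm_eq_abs]
  gcongr
  exact hle N n

end RatioCoeff

section Hutchinson

open Filter Topology Polynomial

lemma sum_neg_one_pow_mul_mem_Icc_of_antitone {b : ℕ → ℝ} (hb0 : ∀ i, 0 ≤ b i) (hb : Antitone b)
    (m : ℕ) : ∑ i ∈ Finset.range m, (-1) ^ i * b i ∈ Set.Icc 0 (b 0) := by
  induction m generalizing b with
  | zero => simpa using hb0 0
  | succ m ih =>
    have htail := ih (b := fun i => b (i + 1)) (fun i => hb0 _) fun i j hij =>
      hb (Nat.succ_le_succ hij)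
    have hsum : ∑ i ∈ Finset.range (m + 1), (-1) ^ i * b i =
        b 0 - ∑ i ∈ Finset.range m, (-1) ^ i * b (i + 1) := by
      rw [Finset.sum_range_succ']
      simp [pow_succ, Finset.sum_neg_distrib, ← sub_eq_neg_add]
    rw [hsum]
    exact ⟨sub_nonneg.2 (htail.2.trans (hb zero_le_one)), sub_le_self _ htail.1⟩

lemma neg_one_pow_mul_sum_neg_one_pow_mul_mem_Icc {b : ℕ → ℝ} (hb0 : 0 ≤ b 0) {m : ℕ}
    (hb : ∀ i < m, b i ≤ b (i + 1)) :
    (-1) ^ m * ∑ i ∈ Finset.range (m + 1), (-1) ^ i * b i ∈ Set.Icc 0 (b m) := by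
  induction m with
  | zero => simpa using hb0
  | succ m ih =>
    obtain ⟨hlow, hhigh⟩ := ih fun i hi => hb i (hi.trans m.lt_succ_self)
    have hsign : (-1 : ℝ) ^ (m + 1) * (-1) ^ (m + 1) = 1 := by simp [← mul_pow]
    have hlast := hb m m.lt_succ_self
    rw [Finset.sum_range_succ, mul_add, ← mul_assoc _ _ (b (m + 1)), hsign, pow_succ]
    constructor <;> linarith

lemma neg_one_pow_mul_sum_nonneg_of_unimodal {b : ℕ → ℝ} (hb0 : ∀ i, 0 ≤ b i) {k N : ℕ}
    (hkN : k ≤ N) (hinc : ∀ i, i + 1 < k → b i ≤ b (i + 1)) (hdec : ∀ i ≥ k, b (i + 1) ≤ b i)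
    (hpeak : ∀ j, j + 1 = k → b j + b (k + 1) ≤ b k) :
    0 ≤ (-1) ^ k * ∑ i ∈ Finset.range (N + 1), (-1) ^ i * b i := by
  have hanti : Antitone fun i => b (k + i) :=
    antitone_nat_of_succ_le fun i => hdec (k + i) (k.le_add_right i)
  obtain _ | j := k
  · rw [pow_zero, one_mul]
    exact (sum_neg_one_pow_mul_mem_Icc_of_antitone hb0 (by simpa using hanti) _).1
  obtain ⟨m, rfl⟩ := Nat.exists_eq_add_of_le hkN
  have hhead := (neg_one_pow_mul_sum_neg_one_pow_mul_mem_Icc (hb0 0) (m := j)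
    fun i hi => hinc i (by omega)).2
  have htail := (sum_neg_one_pow_mul_mem_Icc_of_antitone (b := fun i => b (j + 1 + 1 + i))
    (fun i => hb0 _) (fun i i' hi => by
      simpa only [add_assoc] using hanti (Nat.add_le_add_left hi 1))
    m).2
  have hsign : (-1 : ℝ) ^ (j + 1) * (-1) ^ (j + 1) = 1 := by simp [← mul_pow]
  have hsplit : (-1) ^ (j + 1) * ∑ i ∈ Finset.range (j + 1 + m + 1), (-1) ^ i * b i =
      b (j + 1) - (-1) ^ j * ∑ i ∈ Finset.range (j + 1), (-1) ^ i * b i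
        - ∑ i ∈ Finset.range m, (-1) ^ i * b (j + 1 + 1 + i) := by
    have hshift : ∑ i ∈ Finset.range m, (-1) ^ (j + 1 + 1 + i) * b (j + 1 + 1 + i) =
        (-1) ^ (j + 1 + 1) * ∑ i ∈ Finset.range m, (-1) ^ i * b (j + 1 + 1 + i) := by
      simp only [pow_add _ (j + 1 + 1), mul_assoc, Finset.mul_sum]
    rw [show j + 1 + m + 1 = j + 1 + 1 + m by ring, Finset.sum_range_add,
      Finset.sum_range_succ _ (j + 1), hshift, pow_succ _ (j + 1)]
    linear_combination (b (j + 1) - ∑ i ∈ Finset.range m, (-1) ^ i * b (j + 1 + 1 + i)) * hsign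
  rw [hsplit]
  linarith [hpeak j rfl]

lemma IsLacunary.neg_one_pow_mul_sum_ratioCoeff_nonneg {p : ℝ} {u : ℕ → ℝ} (hu : IsLacunary p u)
    (hp0 : 0 < p) (hp1 : p ≤ 1) {k N : ℕ} (hkN : k ≤ N) (hk : p ≤ u k * (1 - u k)) :
    0 ≤ (-1) ^ k * ∑ n ∈ Finset.range (N + 1), ratioCoeff u n := by
  have huk0 : p ≤ u k := by nlinarith [sq_nonneg (u k)]
  have huk1 : u k ≤ 1 := by nlinarith
  have hb0 (n : ℕ) : 0 ≤ ∏ i ∈ Finset.range n, u i := Finset.prod_nonneg fun i _ => hu.nonneg i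
  simp only [ratioCoeff_eq_neg_one_pow_mul]
  refine neg_one_pow_mul_sum_nonneg_of_unimodal hb0 hkN (fun i hi => ?_) (fun i hi => ?_) ?_
  · rw [Finset.prod_range_succ]
    refine le_mul_of_one_le_right (hb0 i) (le_of_mul_le_mul_left ?_ hp0)
    rw [mul_one]
    exact huk0.trans (hu.le_mul_of_lt hp1 (i.lt_succ_self.trans hi))
  · rw [Finset.prod_range_succ]
    exact mul_le_of_le_one_right (hb0 i) ((hu.antitone hp1 hi).trans huk1)
  · rintro j rfl
    have hj : 1 ≤ u j * (1 - u (j + 1)) := by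
      refine le_of_mul_le_mul_left ?_ hp0
      rw [mul_one, ← mul_assoc]
      exact hk.trans (mul_le_mul_of_nonneg_right (hu.succ_le j) (sub_nonneg.2 huk1))
    simp only [Finset.prod_range_succ]
    linarith [mul_le_mul_of_nonneg_left hj (hb0 j)]

lemma eval_sum_monomial_ratioCoeff (ρ : ℕ → ℝ) (N : ℕ) (x : ℝ) :
    (∑ n ∈ Finset.range N, monomial n (ratioCoeff ρ n)).eval x =
      ∑ n ∈ Finset.range N, ratioCoeff (x • ρ) n := by
  simp only [eval_finsetSum, eval_monomial, ratioCoeff_smul]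

-- Both `y = 3 / 4 - p` and `y = 1 / 4 + p` satisfy `p ≤ y * (1 - y)`, so the sign of the polynomial
-- is known at `y / ρ k`; a root lies between `(3 / 4 - p) / ρ k` and `(1 / 4 + p) / ρ (k + 1)`.
lemma IsLacunary.hasSeparatedRoots_sum_monomial_ratioCoeff {p : ℝ} {ρ : ℕ → ℝ}
    (hρ : IsLacunary p ρ) (hρ_pos : ∀ n, 0 < ρ n) (hp0 : 0 < p) (hp1 : p < 1 / 4) (N : ℕ) :
    HasSeparatedRoots ((1 / 4 + p) / (3 / 4 - p)) N
      (∑ n ∈ Finset.range (N + 1), monomial n (ratioCoeff ρ n)) := by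
  have hscale (y : ℝ) (k : ℕ) : y / ρ k * ρ k = y := div_mul_cancel₀ y (hρ_pos k).ne'
  have hsign {k : ℕ} (hk : k ≤ N) {y : ℝ} (hy0 : 0 < y) (hy : p ≤ y * (1 - y)) :
      0 ≤ (-1) ^ k * (∑ n ∈ Finset.range (N + 1), monomial n (ratioCoeff ρ n)).eval (y / ρ k) := by
    rw [eval_sum_monomial_ratioCoeff]
    refine (hρ.smul (div_pos hy0 (hρ_pos k)).le).neg_one_pow_mul_sum_ratioCoeff_nonneg hp0
      (by linarith) hk ?_
    rwa [Pi.smul_apply, smul_eq_mul, hscale]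
  have hright (k : ℕ) : (1 / 4 + p) / (3 / 4 - p) * ((3 / 4 - p) / ρ (k + 1)) =
      (1 / 4 + p) / ρ (k + 1) := div_mul_div_cancel₀ (by linarith)
  refine hasSeparatedRoots_of_sign_changes (div_nonneg (by linarith) (by linarith))
    ((div_lt_one (by linarith)).2 (by linarith)) ?_ ?_ (a := fun k => (3 / 4 - p) / ρ k)
    (fun k _ => (div_pos (by linarith) (hρ_pos k)).le) (fun k _ => ?_)
    (fun k hk => hsign hk.le (by linarith) (by nlinarith)) fun k hk => ?_
  · exact natDegree_sum_le_of_forall_le _ _ fun n hn =>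
      (natDegree_monomial_le _).trans (Nat.lt_succ_iff.1 (Finset.mem_range.1 hn))
  · simp [eval_finsetSum, eval_monomial, Finset.sum_range_succ']
  · rw [hright, div_le_div_iff₀ (hρ_pos _) (hρ_pos _)]
    have hgap : (3 / 4 - p) * p ≤ 1 / 4 + p := by nlinarith
    nlinarith [mul_le_mul_of_nonneg_right hgap (hρ_pos k).le, hρ.succ_le k]
  · have hsign' := hsign (Nat.succ_le_of_lt hk) (y := 1 / 4 + p) (by linarith) (by nlinarith)
    rw [hright]
    rw [pow_succ] at hsign'
    linarith

theorem IsLacunary.exists_tsum_ratioCoeff_eq_rootProd {p : ℝ} {ρ : ℕ → ℝ} (hρ : IsLacunary p ρ)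
    (hρ_pos : ∀ n, 0 < ρ n) (hp0 : 0 < p) (hp1 : p < 1 / 4) :
    ∃ θ ∈ Set.Ioo (0 : ℝ) 1, ∃ t, IsLacunary θ t ∧
      ∀ w : ℂ, ∑' n, ratioCoeff ρ n • w ^ n = rootProd t w := by
  have hθ0 : 0 < (1 / 4 + p) / (3 / 4 - p) := div_pos (by linarith) (by linarith)
  have hθ1 : (1 / 4 + p) / (3 / 4 - p) < 1 := (div_lt_one (by linarith)).2 (by linarith)
  refine ⟨_, ⟨hθ0, hθ1⟩, exists_tsum_eq_rootProd_of_tendsto_coeff hθ0.le hθ1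
    (hρ.hasSeparatedRoots_sum_monomial_ratioCoeff hρ_pos hp0 hp1) (fun n => ?_) (fun N n => ?_)
    (summable_abs_ratioCoeff_mul_pow (hρ.summable hp0.le (by linarith)).tendsto_atTop_zero)⟩
  · refine tendsto_const_nhds.congr' ?_
    filter_upwards [eventually_ge_atTop n] with N hN
    simp [coeff_monomial, hN]
  · by_cases hn : n ≤ N <;> simp [coeff_monomial, hn]

end Hutchinson

section Bessel

open Filter Topology Polynomial

lemma one_sub_mul_pow_pos {c p : ℝ} (hc0 : 0 ≤ c) (hc1 : c < 1) (hp0 : 0 ≤ p) (hp1 : p ≤ 1)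
    (n : ℕ) : 0 < 1 - c * p ^ n :=
  sub_pos.2 ((mul_le_of_le_one_right hc0 (pow_le_one₀ hp0 hp1)).trans_lt hc1)

lemma one_sub_pow_succ_pos {p : ℝ} (hp0 : 0 ≤ p) (hp1 : p < 1) (n : ℕ) : 0 < 1 - p ^ (n + 1) :=
  sub_pos.2 (pow_lt_one₀ hp0 hp1 n.succ_ne_zero)

-- The comparison of the products over `N + 1` factors, split off at either end.
lemma prod_one_sub_pow_functional_equation {R : Type*} [CommRing R] (p : R) (N : ℕ) :
    (1 - C (p ^ N) * X) * ∏ k ∈ Finset.range N, (1 - C (p ^ k) * X) =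
      (1 - X) * (∏ k ∈ Finset.range N, (1 - C (p ^ k) * X)).comp (C p * X) := by
  rw [← Finset.prod_range_succ_comm fun k => 1 - C (p ^ k) * X, Finset.prod_range_succ',
    prod_comp, mul_comm]
  simp [pow_succ, mul_assoc]

lemma coeff_prod_one_sub_pow {p : ℝ} (hp0 : 0 ≤ p) (hp1 : p < 1) (N n : ℕ) :
    (∏ k ∈ Finset.range N, (1 - C (p ^ k) * X)).coeff n =
      ratioCoeff (fun i => (p ^ i - p ^ N) / (1 - p ^ (i + 1))) n := by
  set P := ∏ k ∈ Finset.range N, (1 - C (p ^ k) * X) with hP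
  have hzero : P.coeff 0 = 1 := by simp [hP, coeff_zero_eq_eval_zero, eval_prod]
  rw [eq_mul_ratioCoeff (a := P.coeff) fun n => ?_, hzero, one_mul]
  have hcoeff := congrArg (coeff · (n + 1)) (prod_one_sub_pow_functional_equation p N)
  simp only [sub_mul, one_mul, mul_assoc, coeff_sub, coeff_C_mul, coeff_X_mul,
    comp_C_mul_X_coeff] at hcoeff
  have hne := (one_sub_pow_succ_pos hp0 hp1 n).ne'
  field_simp
  linear_combination hcoeff

lemma hasSeparatedRoots_prod_one_sub_pow {p : ℝ} (hp0 : 0 < p) (hp1 : p < 1) (N : ℕ) :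
    HasSeparatedRoots p N (∏ k ∈ Finset.range N, (1 - C (p ^ k) * X)) := by
  refine hasSeparatedRoots_of_eval_eq_zero hp0.le hp1
    ((natDegree_prod_one_sub_C_mul_X_le _ _).trans_eq (Finset.card_range N)) (by simp [eval_prod])
    (r := fun k => (p ^ k)⁻¹) (fun k _ => inv_pos.2 (pow_pos hp0 k)) (fun k _ => ?_)
    fun k hk => ?_
  · rw [pow_succ', mul_inv, mul_inv_cancel_left₀ hp0.ne']
  · rw [eval_prod]
    exact Finset.prod_eq_zero (Finset.mem_range.2 hk) (by simp [(pow_pos hp0 k).ne'])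

lemma HasSeparatedRoots.exists_coeff_eq_prod_mul {c p : ℝ} (hc0 : 0 ≤ c) (hc1 : c < 1)
    (hp0 : 0 < p) (hp1 : p < 1) {N : ℕ} {P : ℝ[X]} (hP : HasSeparatedRoots p N P) (M : ℕ) :
    ∃ Q, HasSeparatedRoots p N Q ∧ ∀ n, Q.coeff n =
      (∏ i ∈ Finset.range n, (1 - c * p ^ (i + M)) / (1 - c * p ^ i)) * P.coeff n := by
  have hne (m : ℕ) : 1 - c * p ^ m ≠ 0 := (one_sub_mul_pow_pos hc0 hc1 hp0.le hp1.le m).ne'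
  induction M with
  | zero => exact ⟨P, hP, fun n => by simp [div_self (hne _)]⟩
  | succ M ih =>
    obtain ⟨Q, hQ, hcoeff⟩ := ih
    have hcM := sub_pos.1 (one_sub_mul_pow_pos hc0 hc1 hp0.le hp1.le M)
    refine ⟨_, hQ.dilationDiff (mul_nonneg hc0 (pow_nonneg hp0.le M)) hcM hp0 hp1, fun n => ?_⟩
    rw [coeff_dilationDiff, hcoeff, ← mul_assoc]
    congr 1
    induction n with
    | zero => simp [div_self (hne M)]
    | succ n ih =>
      have hM := hne M
      have hn := hne n
      have hnM := hne (n + M)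
      rw [Finset.prod_range_succ, Finset.prod_range_succ, ← ih]
      have hpow : c * p ^ M * p ^ n = c * p ^ (n + M) := by ring
      rw [hpow]
      field_simp
      ring

/-- The coefficient quotients of the Hahn–Exton `q`-Bessel function with base `p`: the series
`∑ (-1)ⁿ p^(n(n-1)/2) wⁿ / ((p; p)ₙ (c; p)ₙ)`. -/
noncomputable def besselRatio (c p : ℝ) (i : ℕ) : ℝ :=
  p ^ i / ((1 - p ^ (i + 1)) * (1 - c * p ^ i))

/-- The coefficient quotients of the polynomial of degree `N` obtained from `∏_{k<N} (1 - pᵏ X)` by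
applying `dilationDiff (c pᵐ) p` for all `m < N`; it approximates the series of `besselRatio`. -/
noncomputable def besselPolyRatio (c p : ℝ) (N i : ℕ) : ℝ :=
  (p ^ i - p ^ N) / (1 - p ^ (i + 1)) * ((1 - c * p ^ (i + N)) / (1 - c * p ^ i))

lemma exists_coeff_eq_ratioCoeff_besselPolyRatio {c p : ℝ} (hc0 : 0 ≤ c) (hc1 : c < 1)
    (hp0 : 0 < p) (hp1 : p < 1) (N : ℕ) :
    ∃ Q : ℝ[X], HasSeparatedRoots p N Q ∧
      ∀ n, Q.coeff n = ratioCoeff (besselPolyRatio c p N) n := by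
  obtain ⟨Q, hQ, hcoeff⟩ :=
    (hasSeparatedRoots_prod_one_sub_pow hp0 hp1 N).exists_coeff_eq_prod_mul hc0 hc1 hp0 hp1 N
  refine ⟨Q, hQ, fun n => ?_⟩
  rw [hcoeff, coeff_prod_one_sub_pow hp0.le hp1, ratioCoeff, ratioCoeff,
    ← Finset.prod_mul_distrib]
  exact Finset.prod_congr rfl fun i _ => by rw [besselPolyRatio]; ring

lemma tendsto_besselPolyRatio {c p : ℝ} (hp0 : 0 ≤ p) (hp1 : p < 1) (i : ℕ) :
    Tendsto (fun N => besselPolyRatio c p N i) atTop (𝓝 (besselRatio c p i)) := by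
  have hpow := tendsto_pow_atTop_nhds_zero_of_lt_one hp0 hp1
  have hlim := ((hpow.const_sub (p ^ i)).div_const (1 - p ^ (i + 1))).mul
    (((hpow.const_mul (c * p ^ i)).const_sub 1).div_const (1 - c * p ^ i))
  rw [sub_zero, mul_zero, sub_zero, div_mul_div_comm, mul_one] at hlim
  simpa only [besselPolyRatio, besselRatio, pow_add p i, ← mul_assoc] using hlim

lemma abs_besselPolyRatio_le {c p : ℝ} (hc0 : 0 ≤ c) (hc1 : c < 1) (hp0 : 0 ≤ p) (hp1 : p < 1)
    {i N : ℕ} (hi : i ≤ N) :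
    |besselPolyRatio c p N i| ≤ besselRatio c p i := by
  have hden1 := one_sub_pow_succ_pos hp0 hp1 i
  have hden2 := one_sub_mul_pow_pos hc0 hc1 hp0 hp1.le i
  have hnum1 : 0 ≤ p ^ i - p ^ N := sub_nonneg.2 (pow_le_pow_of_le_one hp0 hp1.le hi)
  have hnum2 := one_sub_mul_pow_pos hc0 hc1 hp0 hp1.le (i + N)
  rw [besselPolyRatio, besselRatio, div_mul_div_comm, abs_of_nonneg (by positivity)]
  gcongr
  refine (mul_le_of_le_one_right hnum1 ?_).trans ?_
  · exact sub_le_self _ (by positivity)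
  · exact sub_le_self _ (by positivity)

lemma isLacunary_pow_div {a b p : ℝ} (ha0 : 0 ≤ a) (ha1 : a < 1) (hb0 : 0 ≤ b) (hb1 : b < 1)
    (hp0 : 0 ≤ p) (hp1 : p ≤ 1) :
    IsLacunary p fun n => p ^ n / ((1 - a * p ^ n) * (1 - b * p ^ n)) := by
  have ha := one_sub_mul_pow_pos ha0 ha1 hp0 hp1
  have hb := one_sub_mul_pow_pos hb0 hb1 hp0 hp1
  refine ⟨fun n => div_nonneg (pow_nonneg hp0 n) (mul_pos (ha n) (hb n)).le, fun n => ?_⟩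
  have hanti : p ^ (n + 1) ≤ p ^ n := pow_le_pow_of_le_one hp0 hp1 n.le_succ
  have han := ha n
  have hbn := hb n
  have ha' := ha (n + 1)
  rw [← mul_div_assoc, ← pow_succ']
  gcongr

theorem exists_tsum_besselRatio_eq_rootProd {c p : ℝ} (hc0 : 0 ≤ c) (hc1 : c < 1) (hp0 : 0 < p)
    (hp1 : p < 1) :
    ∃ t, IsLacunary p t ∧
      ∀ w : ℂ, ∑' n, ratioCoeff (besselRatio c p) n • w ^ n = rootProd t w := by
  have hlac : IsLacunary p (besselRatio c p) := by
    unfold besselRatio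
    simpa only [← pow_succ'] using isLacunary_pow_div hp0.le hp1 hc0 hc1 hp0.le hp1.le
  choose Q hQ hcoeff using exists_coeff_eq_ratioCoeff_besselPolyRatio hc0 hc1 hp0 hp1
  refine exists_tsum_eq_rootProd_of_tendsto_coeff hp0.le hp1 hQ (fun n => ?_) (fun N n => ?_)
    (summable_abs_ratioCoeff_mul_pow (hlac.summable hp0.le hp1).tendsto_atTop_zero)
  · simp only [hcoeff]
    exact tendsto_ratioCoeff (tendsto_besselPolyRatio hp0.le hp1) n
  · rcases le_or_gt n N with hn | hn
    · rw [hcoeff]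
      exact abs_ratioCoeff_le fun i hi =>
        abs_besselPolyRatio_le hc0 hc1 hp0.le hp1 (hi.le.trans hn)
    · rw [coeff_eq_zero_of_natDegree_lt ((hQ N).natDegree_le.trans_lt hn), abs_zero]
      exact abs_nonneg _

end Bessel

section QGamma

variable {q : ℝ}

lemma qPochInf_eq_rootProd (a q : ℝ) : qPochInf a q = rootProd (fun k => q ^ k) a := by
  simp only [qPochInf, rootProd, smul_eq_mul, mul_comm]

lemma qPochInf_ne_zero {a : ℝ} (hq0 : 0 ≤ q) (hq1 : q < 1) (ha : a < 1) : qPochInf a q ≠ 0 := by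
  rw [qPochInf_eq_rootProd, Ne, rootProd_eq_zero_iff (summable_geometric_of_lt_one hq0 hq1)]
  rintro ⟨k, hk⟩
  have hle : q ^ k * a ≤ max a 0 := by
    rcases le_total a 0 with ha0 | ha0
    · exact (mul_nonpos_of_nonneg_of_nonpos (pow_nonneg hq0 k) ha0).trans (le_max_right a 0)
    · exact (mul_le_of_le_one_left ha0 (pow_le_one₀ hq0 hq1.le)).trans (le_max_left a 0)
  exact (hle.trans_lt (max_lt ha one_pos)).ne hk

lemma qPochInf_eq_one_sub_mul (a : ℝ) (hq0 : 0 ≤ q) (hq1 : q < 1) :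
    qPochInf a q = (1 - a) * qPochInf (a * q) q := by
  have hsum : Summable fun k => q ^ (k + 1) :=
    (summable_nat_add_iff 1).2 (summable_geometric_of_lt_one hq0 hq1)
  have hmul : Multipliable fun k => 1 - a * q ^ (k + 1) := by
    simpa only [smul_eq_mul, mul_comm] using multipliable_one_sub_smul hsum a
  calc qPochInf a q
      = (1 - a * q ^ 0) * ∏' k, (1 - a * q ^ (k + 1)) := tprod_eq_zero_mul' hmul
    _ = (1 - a) * qPochInf (a * q) q := by
      simp only [qPochInf, pow_zero, pow_succ', mul_one, mul_assoc]

lemma qGamma_ne_zero {x : ℝ} (hq0 : 0 < q) (hq1 : q < 1) (hx : 0 < x) : qGamma q x ≠ 0 :=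
  div_ne_zero
    (mul_ne_zero (qPochInf_ne_zero hq0.le hq1 hq1) (Real.rpow_pos_of_pos (sub_pos.2 hq1) _).ne')
    (qPochInf_ne_zero hq0.le hq1 (Real.rpow_lt_one hq0.le hq1 hx))

lemma qGamma_add_one {x : ℝ} (hq0 : 0 < q) (hq1 : q < 1) (hx : 0 < x) :
    qGamma q (x + 1) = (1 - q ^ x) / (1 - q) * qGamma q x := by
  have hqx := Real.rpow_lt_one hq0.le hq1 hx
  have hpoch := qPochInf_eq_one_sub_mul (q ^ x) hq0.le hq1
  rw [← Real.rpow_add_one hq0.ne'] at hpoch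
  have hbase : (1 - q) ^ (1 - x) = (1 - q) ^ (1 - (x + 1)) * (1 - q) := by
    rw [← Real.rpow_add_one (sub_pos.2 hq1).ne']
    ring_nf
  have h1q : 1 - q ≠ 0 := (sub_pos.2 hq1).ne'
  have h1qx : 1 - q ^ x ≠ 0 := (sub_pos.2 hqx).ne'
  rw [qGamma, qGamma, hpoch, hbase]
  field_simp

lemma qGamma_add_two {x : ℝ} (hq0 : 0 < q) (hq1 : q < 1) (hx : 0 < x) :
    qGamma q (x + 2) = (1 - q ^ x) * (1 - q ^ (x + 1)) / (1 - q) ^ 2 * qGamma q x := by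
  rw [← one_add_one_eq_two, ← add_assoc, qGamma_add_one hq0 hq1 (by linarith),
    qGamma_add_one hq0 hq1 hx, ← mul_assoc, div_mul_div_comm, ← sq, mul_comm (1 - q ^ (x + 1))]

end QGamma

section QMittagLeffler

variable {q γ : ℝ}

/-- The coefficient quotients of the `q`-Mittag-Leffler function as a series in
`σ² (1 - q)² z²`. -/
noncomputable def qMLRatio (γ q : ℝ) (n : ℕ) : ℝ :=
  (q ^ 2) ^ n / ((1 - q ^ (γ + 1) * (q ^ 2) ^ n) * (1 - q ^ (γ + 2) * (q ^ 2) ^ n))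

lemma isLacunary_qMLRatio (hq0 : 0 < q) (hq1 : q < 1) (hγ : -1 < γ) :
    IsLacunary (q ^ 2) (qMLRatio γ q) :=
  isLacunary_pow_div (Real.rpow_nonneg hq0.le _) (Real.rpow_lt_one hq0.le hq1 (by linarith))
    (Real.rpow_nonneg hq0.le _) (Real.rpow_lt_one hq0.le hq1 (by linarith)) (sq_nonneg q)
    (pow_le_one₀ hq0.le hq1.le)

lemma qMLRatio_pos (hq0 : 0 < q) (hq1 : q < 1) (hγ : -1 < γ) (n : ℕ) : 0 < qMLRatio γ q n := by
  have hden {x : ℝ} (hx : 0 < x) : 0 < 1 - q ^ x * (q ^ 2) ^ n :=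
    one_sub_mul_pow_pos (Real.rpow_nonneg hq0.le x) (Real.rpow_lt_one hq0.le hq1 hx) (sq_nonneg q)
      (pow_le_one₀ hq0.le hq1.le) n
  exact div_pos (by positivity) (mul_pos (hden (by linarith)) (hden (by linarith)))

lemma qMLRatio_zero (q : ℝ) : qMLRatio 0 q = besselRatio q (q ^ 2) := by
  funext n
  rw [qMLRatio, besselRatio, zero_add, zero_add, Real.rpow_one, Real.rpow_two, ← pow_succ',
    mul_comm (1 - q * _)]

lemma qMLRatio_one (q : ℝ) : qMLRatio 1 q = besselRatio (q ^ 3) (q ^ 2) := by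
  funext n
  rw [qMLRatio, besselRatio, one_add_one_eq_two, Real.rpow_two, ← pow_succ',
    show (1 : ℝ) + 2 = (3 : ℕ) by norm_num, Real.rpow_natCast]

lemma qML_coeff_eq (σ : ℝ) (hq0 : 0 < q) (hq1 : q < 1) (hγ : -1 < γ) (n : ℕ) :
    (-1) ^ n * σ ^ (2 * n) * q ^ (n * (n - 1)) / qGamma q (2 * n + γ + 1) =
      (qGamma q (γ + 1))⁻¹ * ratioCoeff ((σ ^ 2 * (1 - q) ^ 2) • qMLRatio γ q) n := by
  rw [eq_mul_ratioCoeff (a := fun n : ℕ => (-1) ^ n * σ ^ (2 * n) * q ^ (n * (n - 1)) /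
    qGamma q (2 * n + γ + 1)) (ρ := (σ ^ 2 * (1 - q) ^ 2) • qMLRatio γ q) fun n => ?_]
  · simp
  have hx : 0 < 2 * (n : ℝ) + γ + 1 := by linarith [n.cast_nonneg (α := ℝ)]
  have hrpow (b : ℝ) : q ^ b * (q ^ 2) ^ n = q ^ (2 * (n : ℝ) + b) := by
    rw [← pow_mul, ← Real.rpow_add_natCast hq0.ne']
    push_cast
    rw [add_comm]
  have hpow : q ^ ((n + 1) * (n + 1 - 1)) = q ^ (n * (n - 1)) * (q ^ 2) ^ n := by
    rw [← pow_mul, ← pow_add]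
    congr 1
    obtain _ | m := n
    · rfl
    · simp only [Nat.add_sub_cancel]
      ring
  have hgamma := qGamma_add_two hq0 hq1 hx
  rw [show 2 * (n : ℝ) + γ + 1 + 2 = 2 * (n + 1 : ℕ) + γ + 1 by push_cast; ring] at hgamma
  simp only [Pi.smul_apply, smul_eq_mul, qMLRatio, hrpow, hgamma, hpow]
  rw [show 2 * (n : ℝ) + (γ + 1) = 2 * n + γ + 1 by ring,
    show 2 * (n : ℝ) + (γ + 2) = 2 * n + γ + 1 + 1 by ring]
  simp only [div_eq_mul_inv, mul_inv, inv_inv]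
  ring

lemma qML_eq_mul_tsum (σ : ℝ) (hq0 : 0 < q) (hq1 : q < 1) (hγ : -1 < γ) (z : ℂ) :
    qML γ σ q z = ((qGamma q (γ + 1))⁻¹ : ℝ) *
      ∑' n, ratioCoeff (qMLRatio γ q) n • ((σ ^ 2 * (1 - q) ^ 2) • z ^ 2) ^ n := by
  rw [qML, ← tsum_mul_left]
  refine tsum_congr fun n => ?_
  rw [qML_coeff_eq σ hq0 hq1 hγ, ratioCoeff_smul, pow_mul, smul_pow, smul_smul,
    Complex.real_smul, Complex.ofReal_mul, mul_assoc]

lemma qML_ofReal (γ σ q x : ℝ) : qML γ σ q x = qMLR γ σ q x := by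
  rw [qML, qMLR, Complex.ofReal_tsum]
  exact tsum_congr fun n => by push_cast; rfl

lemma exists_tsum_qMLRatio_eq_rootProd (hq0 : 0 < q) (hq1 : q < 1) (hγ : -1 < γ)
    (hR : γ = 0 ∨ γ = 1 ∨ q < 1 / 2) :
    ∃ θ ∈ Set.Ioo (0 : ℝ) 1, ∃ t, IsLacunary θ t ∧
      ∀ w : ℂ, ∑' n, ratioCoeff (qMLRatio γ q) n • w ^ n = rootProd t w := by
  have hsq0 : 0 < q ^ 2 := pow_pos hq0 2
  have hsq1 : q ^ 2 < 1 := pow_lt_one₀ hq0.le hq1 two_ne_zero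
  rcases hR with rfl | rfl | hq
  · rw [qMLRatio_zero]
    exact ⟨_, ⟨hsq0, hsq1⟩, exists_tsum_besselRatio_eq_rootProd hq0.le hq1 hsq0 hsq1⟩
  · rw [qMLRatio_one]
    exact ⟨_, ⟨hsq0, hsq1⟩, exists_tsum_besselRatio_eq_rootProd (pow_pos hq0 3).le
      (pow_lt_one₀ hq0.le hq1 three_ne_zero) hsq0 hsq1⟩
  · exact (isLacunary_qMLRatio hq0 hq1 hγ).exists_tsum_ratioCoeff_eq_rootProd
      (qMLRatio_pos hq0 hq1 hγ) hsq0 (by nlinarith)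

theorem exists_qML_eq_mul_rootProd_sq (σ : ℝ) (hq0 : 0 < q) (hq1 : q < 1) (hγ : -1 < γ)
    (hR : γ = 0 ∨ γ = 1 ∨ q < 1 / 2) :
    ∃ K : ℝ, K ≠ 0 ∧ ∃ θ ∈ Set.Ioo (0 : ℝ) 1, ∃ t, IsLacunary θ t ∧
      (∀ z : ℂ, qML γ σ q z = K * rootProd t (z ^ 2)) ∧
      ∀ x : ℝ, qMLR γ σ q x = K * rootProd t (x ^ 2) := by
  obtain ⟨θ, hθ, t, ht, hrep⟩ := exists_tsum_qMLRatio_eq_rootProd hq0 hq1 hγ hR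
  have hts : IsLacunary θ ((σ ^ 2 * (1 - q) ^ 2) • t) := ht.smul (by positivity)
  have hqML (z : ℂ) : qML γ σ q z =
      ((qGamma q (γ + 1))⁻¹ : ℝ) * rootProd ((σ ^ 2 * (1 - q) ^ 2) • t) (z ^ 2) := by
    rw [qML_eq_mul_tsum σ hq0 hq1 hγ, hrep, rootProd_smul]
  refine ⟨_, inv_ne_zero (qGamma_ne_zero hq0 hq1 (by linarith)), θ, hθ, _, hts, hqML,
    fun x => Complex.ofReal_injective ?_⟩
  rw [← qML_ofReal, hqML, ← Complex.ofReal_pow, rootProd_ofReal (hts.summable hθ.1.le hθ.2),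
    Complex.ofReal_mul]

lemma eq_zero_or_eq_one_or_lt_half_of_condR (hq0 : 0 < q) (hq1 : q < 1) (hR : condR q γ) :
    γ = 0 ∨ γ = 1 ∨ q < 1 / 2 := by
  rcases hR with (hγ | hγ) | ⟨hγ, -, hR⟩
  · exact .inl hγ
  · exact .inr (.inl hγ)
  have hfactor {x : ℝ} (hx : 0 < x) : 0 ≤ 1 - q ^ x ∧ 1 - q ^ x ≤ 1 :=
    ⟨sub_nonneg.2 (Real.rpow_lt_one hq0.le hq1 hx).le, sub_le_self _ (Real.rpow_nonneg hq0.le x)⟩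
  obtain ⟨hnonneg, hle⟩ := hfactor (x := γ + 1) (by linarith [hγ.1])
  have hle' := (hfactor (x := γ + 2) (by linarith [hγ.1])).2
  have hbase : 0 ≤ q⁻¹ * (1 - q) := mul_nonneg (inv_nonneg.2 hq0.le) (sub_nonneg.2 hq1.le)
  have hlt : 1 < q⁻¹ * (1 - q) := calc
    1 < q⁻¹ * (1 - q) * (1 - q ^ (γ + 1)) * (1 - q ^ (γ + 2)) := hR
    _ ≤ q⁻¹ * (1 - q) * (1 - q ^ (γ + 1)) :=
      mul_le_of_le_one_right (mul_nonneg hbase hnonneg) hle'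
    _ ≤ q⁻¹ * (1 - q) := mul_le_of_le_one_right hbase hle
  rw [inv_mul_eq_div, one_lt_div hq0] at hlt
  exact .inr (.inr (by linarith))

end QMittagLeffler

theorem stmt4_general (q σ γ : ℝ) (hq0 : 0 < q) (hq1 : q < 1) (hγ : -1 < γ)
    (hR : γ = 0 ∨ γ = 1 ∨ q < 1 / 2)
    (ε : ℕ → ℝ) (hεmono : StrictMono ε) (hεpos : ∀ n, 0 < ε n)
    (hεzero : ∀ n, qMLR γ σ q (ε n) = 0)
    (hεall : ∀ x : ℝ, 0 < x → qMLR γ σ q x = 0 → ∃ n, x = ε n)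
    (ξ : ℕ → ℝ) (hξmono : StrictMono ξ) (hξpos : ∀ n, 0 < ξ n)
    (hξzero : ∀ n, deriv (fun x : ℝ => x ^ (γ + 1) * qMLR γ σ q x) (ξ n) = 0)
    (hξall : ∀ x : ℝ, 0 < x →
      deriv (fun x : ℝ => x ^ (γ + 1) * qMLR γ σ q x) x = 0 → ∃ n, x = ξ n) :
    (∀ z : ℂ, deriv (fun w : ℂ => w ^ ((γ : ℂ) + 1) * qML γ σ q w) z = 0 → z.im = 0) ∧
    ∀ n : ℕ, ξ n < ε n ∧ ε n < ξ (n + 1) := by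
  obtain ⟨K, hK, θ, ⟨hθ0, hθ1⟩, t, ht, hML, hMLR⟩ :=
    exists_qML_eq_mul_rootProd_sq σ hq0 hq1 hγ hR
  have hsum := ht.summable hθ0.le hθ1
  simp only [hML, hMLR] at hεzero hεall hξzero hξall ⊢
  have hrolle {a b : ℝ} (ha : 0 ≤ a) (hab : a < b)
      (heq : a ^ (γ + 1) * (K * rootProd t (a ^ 2)) = b ^ (γ + 1) * (K * rootProd t (b ^ 2))) :
      ∃ m, ξ m ∈ Set.Ioo a b := by
    obtain ⟨c, hc, hc0⟩ := exists_mem_Ioo_deriv_rpow_mul_rootProd_sq hsum hγ.le hab heq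
    obtain ⟨m, rfl⟩ := hξall c (ha.trans_lt hc.1) hc0
    exact ⟨m, hc⟩
  refine ⟨fun z => im_eq_zero_of_deriv_cpow_mul_rootProd_sq hsum ht.nonneg hγ hK,
    interlacing_of_exists_mem_Ioo hεmono hξmono ?_ (fun n => ?_) fun n => ?_⟩
  · obtain ⟨m, hm⟩ := hrolle le_rfl (hεpos 0) (by
      rw [hεzero, Real.zero_rpow (by linarith), zero_mul, mul_zero])
    exact ⟨m, hm.2⟩
  · exact hrolle (hεpos n).le (hεmono n.lt_succ_self) (by
      rw [hεzero, hεzero, mul_zero, mul_zero])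
  · obtain ⟨c, hc, hc0⟩ := exists_mem_Ioo_rootProd_sq_eq_zero hsum ht.nonneg
      (ht.eq_of_apply_eq hθ1) hγ.ne' hK (hξpos n) (hξmono n.lt_succ_self) (hξzero n) (hξzero _)
    obtain ⟨m, rfl⟩ := hεall c ((hξpos n).trans hc.1) (by rw [hc0, mul_zero])
    exact ⟨m, hc⟩

theorem stmt4 (q σ γ : ℝ) (hq0 : 0 < q) (hq1 : q < 1) (hσ : 0 < σ)
    (hγ0 : 0 ≤ γ) (hγ2 : γ < 2) (hR : condR q γ)
    (ε : ℕ → ℝ) (hεmono : StrictMono ε) (hεpos : ∀ n, 0 < ε n)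
    (hεzero : ∀ n, qMLR γ σ q (ε n) = 0)
    (hεall : ∀ x : ℝ, 0 < x → qMLR γ σ q x = 0 → ∃ n, x = ε n)
    (ξ : ℕ → ℝ) (hξmono : StrictMono ξ) (hξpos : ∀ n, 0 < ξ n)
    (hξzero : ∀ n, deriv (fun x : ℝ => x ^ (γ + 1) * qMLR γ σ q x) (ξ n) = 0)
    (hξall : ∀ x : ℝ, 0 < x →
      deriv (fun x : ℝ => x ^ (γ + 1) * qMLR γ σ q x) x = 0 → ∃ n, x = ξ n) :
    (∀ z : ℂ, deriv (fun w : ℂ => w ^ ((γ : ℂ) + 1) * qML γ σ q w) z = 0 → z.im = 0) ∧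
    ∀ n : ℕ, ξ n < ε n ∧ ε n < ξ (n + 1) :=
  stmt4_general q σ γ hq0 hq1 (by linarith) (eq_zero_or_eq_one_or_lt_half_of_condR hq0 hq1 hR)
    ε hεmono hεpos hεzero hεall ξ hξmono hξpos hξzero hξall
end

section
/- Assume condition (R) and let α∈[0,1). Then the radius of starlikeness of order α of g_{γ,σ}(·;q) equals the smallest positive root y_{γ,σ,1}(q) of the equation r·λ_{γ,σ}'(r;q) − (α−1)·λ_{γ,σ}(r;q) = 0 (derivative with respect to the real variable r). -/
/-! Write `λ(z) = h(z²)` and `P = -w h'(w) / h(w) = ∑ pₙ wⁿ`, whose coefficients are the power sums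
`pₙ = ∑ ζ⁻ⁿ` over the zeros `ζ` of `h`. The nonnegativity of all `pₙ` is proved on formal power
series, without locating the zeros. For `γ ∈ {0, 1}` the series `h` satisfies a second-order
`q²`-difference equation, hence `h(q²w) / h(w)` a Riccati equation, which determines its
coefficients recursively with nonnegative data. In the remaining case (R) forces `q < 1/2`, so the
absolute values `bₙ` of the coefficients of `h` satisfy Hutchinson's condition
`4 bₙ₊₂ bₙ ≤ bₙ₊₁²`, and the terms of the alternating sums in Newton's identities at least halve
at each step.

Nonnegative coefficients of `P` and of `1/h` give `|w h'(w) / h(w)| ≤ P(|w|)` and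
`|1/h(w)| ≤ 1/h(|w|)`. Since `z g'(z) / g(z) = 1 - 2 P(z²)`, the minimum of its real part on a
circle is attained on the real axis, and `h` has no zero closer to `0` than its first positive one.
The first root `y` comes before that zero, because `x ^ β h(x)` with `β = (1 - α) / 2` increases on
`[0, y²]`.
-/

namespace QMittagLeffler

open PowerSeries Finset

section EulerDeriv

variable {R : Type*} [CommSemiring R]

/-- The Euler operator `X · d/dX` on formal power series. -/
noncomputable def eulerDeriv : Derivation R R⟦X⟧ R⟦X⟧ := (X : R⟦X⟧) • derivative (R := R)

lemma coeff_eulerDeriv (f : R⟦X⟧) (n : ℕ) : coeff n (eulerDeriv f) = n * coeff n f := by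
  cases n with
  | zero => simp [eulerDeriv]
  | succ n =>
    simp only [eulerDeriv, Derivation.smul_apply, smul_eq_mul, coeff_succ_X_mul, coeff_derivative]
    push_cast
    ring

lemma eulerDeriv_rescale (a : R) (f : R⟦X⟧) :
    eulerDeriv (rescale a f) = rescale a (eulerDeriv f) := by
  ext n
  simp only [coeff_eulerDeriv, coeff_rescale]
  ring

lemma eulerDeriv_map {S : Type*} [CommSemiring S] (φ : R →+* S) (f : R⟦X⟧) :
    eulerDeriv (f.map φ) = (eulerDeriv f).map φ := by
  ext n
  simp [coeff_eulerDeriv]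

end EulerDeriv

section PowerSumSeries

variable {K : Type*} [Field K] {f h : K⟦X⟧}

/-- The formal series `-X h'/h`. When `h` is an entire function of genus zero, its `n`-th
coefficient, `n ≥ 1`, is the power sum `∑ ζ⁻ⁿ` over the zeros `ζ` of `h`. As `h⁻¹` is the inverse
of formal series, it is meaningful only if `h` has nonzero constant coefficient. -/
noncomputable def powerSumSeries (h : K⟦X⟧) : K⟦X⟧ := -eulerDeriv h * h⁻¹

lemma eq_powerSumSeries_iff (h0 : constantCoeff h ≠ 0) :
    f = powerSumSeries h ↔ f * h = -eulerDeriv h :=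
  PowerSeries.eq_mul_inv_iff_mul_eq h0

lemma powerSumSeries_mul_self (h0 : constantCoeff h ≠ 0) :
    powerSumSeries h * h = -eulerDeriv h :=
  (eq_powerSumSeries_iff h0).mp rfl

lemma coeff_zero_powerSumSeries (h : K⟦X⟧) : coeff 0 (powerSumSeries h) = 0 := by
  simp [powerSumSeries, eulerDeriv]

lemma powerSumSeries_ne_zero (h0 : constantCoeff h ≠ 0) (h1 : coeff 1 h ≠ 0) :
    powerSumSeries h ≠ 0 := by
  intro hP
  have := congrArg (coeff 1) (powerSumSeries_mul_self h0)
  simp [hP, coeff_eulerDeriv, h1] at this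

lemma powerSumSeries_mul (hf : constantCoeff f ≠ 0) (hh : constantCoeff h ≠ 0) :
    powerSumSeries (f * h) = powerSumSeries f + powerSumSeries h := by
  symm
  rw [eq_powerSumSeries_iff (by simp [hf, hh]), Derivation.leibniz, smul_eq_mul, smul_eq_mul]
  linear_combination h * powerSumSeries_mul_self hf + f * powerSumSeries_mul_self hh

lemma constantCoeff_rescale (a : K) (h : K⟦X⟧) :
    constantCoeff (rescale a h) = constantCoeff h := by
  rw [← coeff_zero_eq_constantCoeff_apply, coeff_rescale, pow_zero, one_mul,
    coeff_zero_eq_constantCoeff_apply]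

lemma powerSumSeries_rescale (h0 : constantCoeff h ≠ 0) (a : K) :
    powerSumSeries (rescale a h) = rescale a (powerSumSeries h) := by
  symm
  rw [eq_powerSumSeries_iff (by rwa [constantCoeff_rescale]), ← map_mul,
    powerSumSeries_mul_self h0, map_neg, eulerDeriv_rescale]

lemma constantCoeff_map {L : Type*} [Field L] (φ : K →+* L) (h : K⟦X⟧) :
    constantCoeff (h.map φ) = φ (constantCoeff h) := by
  rw [← coeff_zero_eq_constantCoeff_apply, coeff_map, coeff_zero_eq_constantCoeff_apply]

lemma map_inv {L : Type*} [Field L] (φ : K →+* L) (h0 : constantCoeff h ≠ 0) :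
    (h.map φ)⁻¹ = h⁻¹.map φ := by
  rw [PowerSeries.inv_eq_iff_mul_eq_one (by rwa [constantCoeff_map, map_ne_zero]), ← map_mul,
    PowerSeries.inv_mul_cancel _ h0, map_one]

lemma powerSumSeries_map {L : Type*} [Field L] (φ : K →+* L) (h0 : constantCoeff h ≠ 0) :
    powerSumSeries (h.map φ) = (powerSumSeries h).map φ := by
  simp only [powerSumSeries, eulerDeriv_map, map_inv φ h0, map_mul, map_neg]

lemma eulerDeriv_inv (h : K⟦X⟧) : eulerDeriv h⁻¹ = powerSumSeries h * h⁻¹ := by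
  simp only [eulerDeriv, powerSumSeries, Derivation.smul_apply, smul_eq_mul, derivative_inv']
  ring

end PowerSumSeries

section OrderedField

variable {K : Type*} [Field K] [LinearOrder K] [IsStrictOrderedRing K]

lemma coeff_mul_nonneg {f g : K⟦X⟧} (hf : ∀ n, 0 ≤ coeff n f) (hg : ∀ n, 0 ≤ coeff n g) (n : ℕ) :
    0 ≤ coeff n (f * g) := by
  rw [coeff_mul]
  exact sum_nonneg fun p _ => mul_nonneg (hf _) (hg _)

lemma coeff_eulerDeriv_nonneg {f : K⟦X⟧} (hf : ∀ n, 0 ≤ coeff n f) (n : ℕ) :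
    0 ≤ coeff n (eulerDeriv f) := by
  rw [coeff_eulerDeriv]
  exact mul_nonneg n.cast_nonneg (hf n)

lemma coeff_inv_nonneg {h : K⟦X⟧} (h0 : 0 < constantCoeff h)
    (hP : ∀ n, 0 ≤ coeff n (powerSumSeries h)) (n : ℕ) : 0 ≤ coeff n h⁻¹ := by
  induction n using Nat.strong_induction_on with
  | _ n ih =>
    rcases Nat.eq_zero_or_pos n with rfl | hn
    · simpa using h0.le
    have hrec : n * coeff n h⁻¹ = coeff n (powerSumSeries h * h⁻¹) := by
      rw [← eulerDeriv_inv, coeff_eulerDeriv]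
    have hsum : 0 ≤ coeff n (powerSumSeries h * h⁻¹) := by
      rw [coeff_mul]
      refine sum_nonneg fun ⟨i, j⟩ hij => ?_
      rw [HasAntidiagonal.mem_antidiagonal] at hij
      rcases Nat.eq_zero_or_pos i with rfl | hi
      · rw [coeff_zero_powerSumSeries, zero_mul]
      · exact mul_nonneg (hP i) (ih j (by omega))
    rw [← hrec] at hsum
    exact nonneg_of_mul_nonneg_right hsum (Nat.cast_pos.mpr hn)

lemma coeff_nonneg_of_sub_rescale {f : K⟦X⟧} {Q : K} (hQ0 : 0 ≤ Q) (hQ1 : Q < 1)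
    (hf0 : 0 ≤ coeff 0 f) (hf : ∀ n, 0 ≤ coeff n (f - rescale Q f)) (n : ℕ) : 0 ≤ coeff n f := by
  rcases eq_or_ne n 0 with rfl | hn
  · exact hf0
  have hmul : 0 ≤ (1 - Q ^ n) * coeff n f := by
    simpa only [map_sub, coeff_rescale, sub_mul, one_mul] using hf n
  exact nonneg_of_mul_nonneg_right hmul (sub_pos.mpr (pow_lt_one₀ hQ0 hQ1 hn))

end OrderedField

/-! ### Second-order `Q`-difference equations -/

section QShiftRatio

variable {K : Type*} [Field K] {h : K⟦X⟧} {Q d t : K}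

/-- The formal quotient `h(QX) / h(X)`. -/
noncomputable def qShiftRatio (Q : K) (h : K⟦X⟧) : K⟦X⟧ := rescale Q h * h⁻¹

/-- The series `B(M)` for which the `Q`-difference equation
`h(X) = (1 + d - tX) h(QX) - d h(Q²X)` becomes the Riccati equation `M (1 - B(M)) = 1` of
`M = h(QX) / h(X)`. -/
noncomputable def riccatiKernel (Q d t : K) (M : K⟦X⟧) : K⟦X⟧ :=
  C t * X + C d * (rescale Q M - 1)

lemma qShiftRatio_mul_self (h0 : constantCoeff h ≠ 0) : qShiftRatio Q h * h = rescale Q h := by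
  rw [qShiftRatio, mul_assoc, PowerSeries.inv_mul_cancel _ h0, mul_one]

lemma constantCoeff_qShiftRatio (h0 : constantCoeff h ≠ 0) :
    constantCoeff (qShiftRatio Q h) = 1 := by
  rw [qShiftRatio, map_mul, constantCoeff_rescale, constantCoeff_inv, mul_inv_cancel₀ h0]

lemma coeff_riccatiKernel_of_ne_zero {n : ℕ} (hn : n ≠ 0) (M : K⟦X⟧) :
    coeff n (riccatiKernel Q d t M) = t * (if n = 1 then 1 else 0) + d * (Q ^ n * coeff n M) := by
  simp [riccatiKernel, coeff_X, coeff_rescale, coeff_one, hn]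

lemma coeff_zero_riccatiKernel {M : K⟦X⟧} (hM : constantCoeff M = 1) :
    coeff 0 (riccatiKernel Q d t M) = 0 := by
  rw [riccatiKernel, map_add, coeff_C_mul, coeff_C_mul, map_sub, coeff_rescale]
  simp [hM]

lemma qDifference_of_coeff_recurrence
    (hrec : ∀ n, coeff (n + 1) h * ((1 - Q ^ (n + 1)) * (1 - d * Q ^ (n + 1))) =
      -(t * Q ^ n * coeff n h)) :
    h = (1 + C d - C t * X) * rescale Q h - C d * rescale Q (rescale Q h) := by
  have hexpand : (1 + C d - C t * X) * rescale Q h =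
      rescale Q h + C d * rescale Q h - C t * (X * rescale Q h) := by ring
  ext n
  rw [hexpand]
  simp only [map_sub, map_add, coeff_C_mul, coeff_rescale]
  cases n with
  | zero => simp
  | succ n =>
    rw [coeff_succ_X_mul, coeff_rescale]
    linear_combination hrec n

lemma qShiftRatio_riccati (h0 : constantCoeff h ≠ 0)
    (heq : h = (1 + C d - C t * X) * rescale Q h - C d * rescale Q (rescale Q h)) :
    qShiftRatio Q h * (1 - riccatiKernel Q d t (qShiftRatio Q h)) = 1 := by
  have hinv : h * h⁻¹ = 1 := PowerSeries.mul_inv_cancel _ h0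
  have hinv' : rescale Q h * rescale Q h⁻¹ = 1 := by rw [← map_mul, hinv, map_one]
  rw [riccatiKernel, qShiftRatio, map_mul]
  linear_combination -h⁻¹ * heq + hinv - C d * h⁻¹ * rescale Q (rescale Q h) * hinv'

lemma powerSumSeries_sub_rescale (h0 : constantCoeff h ≠ 0) :
    powerSumSeries h - rescale Q (powerSumSeries h) = -powerSumSeries (qShiftRatio Q h) := by
  have hM : constantCoeff (qShiftRatio Q h) ≠ 0 := by simp [constantCoeff_qShiftRatio h0]
  rw [← powerSumSeries_rescale h0, ← qShiftRatio_mul_self h0, powerSumSeries_mul hM h0]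
  ring

lemma neg_powerSumSeries_of_mul_one_sub_eq_one {M B : K⟦X⟧} (hMB : M * (1 - B) = 1) :
    -powerSumSeries M = M * eulerDeriv B := by
  have hM : constantCoeff M ≠ 0 := fun h => by simpa [h] using congrArg constantCoeff hMB
  have hderiv := congrArg eulerDeriv hMB
  rw [Derivation.leibniz, map_sub, Derivation.map_one_eq_zero, smul_eq_mul, smul_eq_mul] at hderiv
  rw [neg_eq_iff_eq_neg, eq_comm, eq_powerSumSeries_iff hM]
  linear_combination M * hderiv - eulerDeriv M * hMB

end QShiftRatio

section QDifferenceNonneg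

variable {K : Type*} [Field K] [LinearOrder K] [IsStrictOrderedRing K] {Q d t : K}

lemma coeff_riccatiKernel_nonneg (hQ0 : 0 ≤ Q) (hd : 0 ≤ d) (ht : 0 ≤ t) {M : K⟦X⟧}
    (hM : constantCoeff M = 1) {n : ℕ} (hn : 0 ≤ coeff n M) :
    0 ≤ coeff n (riccatiKernel Q d t M) := by
  rcases eq_or_ne n 0 with rfl | hn0
  · exact (coeff_zero_riccatiKernel hM).ge
  · rw [coeff_riccatiKernel_of_ne_zero hn0]
    positivity

lemma coeff_nonneg_of_riccati (hQ0 : 0 ≤ Q) (hQ1 : Q < 1) (hd : 0 ≤ d) (hdQ : d * Q < 1)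
    (ht : 0 ≤ t) {M : K⟦X⟧} (hM : constantCoeff M = 1)
    (hric : M * (1 - riccatiKernel Q d t M) = 1) (n : ℕ) : 0 ≤ coeff n M := by
  induction n using Nat.strong_induction_on with
  | _ n ih =>
    rcases n with _ | n
    · simp [hM]
    set B := riccatiKernel Q d t M with hB
    have hrest : 0 ≤ ∑ p ∈ antidiagonal n, coeff (p.1 + 1) M * coeff p.2 B := by
      refine sum_nonneg fun ⟨i, j⟩ hij => ?_
      rw [HasAntidiagonal.mem_antidiagonal] at hij
      rcases Nat.eq_zero_or_pos j with rfl | hj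
      · rw [hB, coeff_zero_riccatiKernel hM, mul_zero]
      · exact mul_nonneg (ih _ (by omega))
          (coeff_riccatiKernel_nonneg hQ0 hd ht hM (ih _ (by omega)))
    have hMB : M = 1 + M * B := by linear_combination hric
    have hcoeff : coeff (n + 1) M =
        coeff (n + 1) B + ∑ p ∈ antidiagonal n, coeff (p.1 + 1) M * coeff p.2 B := by
      conv_lhs => rw [hMB]
      rw [map_add, coeff_mul, Finset.Nat.sum_antidiagonal_succ]
      simp [hM, coeff_one]
    rw [hB, coeff_riccatiKernel_of_ne_zero n.add_one_ne_zero, ← hB] at hcoeff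
    have hdQn : d * Q ^ (n + 1) < 1 := by
      refine lt_of_le_of_lt (mul_le_mul_of_nonneg_left ?_ hd) hdQ
      exact pow_le_of_le_one hQ0 hQ1.le n.succ_ne_zero
    have hsource : 0 ≤ t * (if n + 1 = 1 then 1 else 0) := by positivity
    have hmul : 0 ≤ (1 - d * Q ^ (n + 1)) * coeff (n + 1) M := by linarith
    exact nonneg_of_mul_nonneg_right hmul (sub_pos.mpr hdQn)

theorem coeff_powerSumSeries_nonneg_of_qRecurrence (hQ0 : 0 ≤ Q) (hQ1 : Q < 1) (hd : 0 ≤ d)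
    (hdQ : d * Q < 1) (ht : 0 ≤ t) {h : K⟦X⟧} (h0 : constantCoeff h ≠ 0)
    (hrec : ∀ n, coeff (n + 1) h * ((1 - Q ^ (n + 1)) * (1 - d * Q ^ (n + 1))) =
      -(t * Q ^ n * coeff n h)) (n : ℕ) :
    0 ≤ coeff n (powerSumSeries h) := by
  have hric := qShiftRatio_riccati h0 (qDifference_of_coeff_recurrence hrec)
  have hM := constantCoeff_qShiftRatio (Q := Q) h0
  have hMnonneg := coeff_nonneg_of_riccati hQ0 hQ1 hd hdQ ht hM hric
  refine coeff_nonneg_of_sub_rescale hQ0 hQ1 (coeff_zero_powerSumSeries h).ge (fun n => ?_) n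
  rw [powerSumSeries_sub_rescale h0, neg_powerSumSeries_of_mul_one_sub_eq_one hric]
  exact coeff_mul_nonneg hMnonneg (coeff_eulerDeriv_nonneg fun j =>
    coeff_riccatiKernel_nonneg hQ0 hd ht hM (hMnonneg j)) n

end QDifferenceNonneg

/-! ### Hutchinson's condition -/

section Hutchinson

variable {K : Type*} [Field K]

/-- The absolute value of the `i`-th term of Newton's identity for the power sum of index `n + 1`,
for the series `∑ (-1)ⁿ bₙ Xⁿ` with power sums `p`. The index `i = n` is special because the
coefficient itself enters with weight `n + 1` there. -/
def newtonTerm (b p : ℕ → K) (n i : ℕ) : K := b (i + 1) * if i = n then (n : K) + 1 else p (n - i)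

lemma newton_identity {h : K⟦X⟧} {b : ℕ → K} (hb : ∀ n, coeff n h = (-1) ^ n * b n)
    (h0 : constantCoeff h ≠ 0) (n : ℕ) :
    b 0 * coeff (n + 1) (powerSumSeries h) = ∑ i ∈ range (n + 1),
      (-1) ^ i * newtonTerm b (fun k => coeff k (powerSumSeries h)) n i := by
  have hcoeff := congrArg (coeff (n + 1)) (powerSumSeries_mul_self h0)
  rw [mul_comm, coeff_mul, Nat.sum_antidiagonal_eq_sum_range_succ_mk, sum_range_succ',
    sum_range_succ, map_neg, coeff_eulerDeriv] at hcoeff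
  simp only [hb, Nat.add_sub_add_right, Nat.sub_self, coeff_zero_powerSumSeries] at hcoeff
  have hterms : ∑ i ∈ range n,
      (-1) ^ i * newtonTerm b (fun k => coeff k (powerSumSeries h)) n i =
      -∑ i ∈ range n, (-1) ^ (i + 1) * b (i + 1) * coeff (n - i) (powerSumSeries h) := by
    rw [← sum_neg_distrib]
    refine sum_congr rfl fun i hi => ?_
    rw [newtonTerm, if_neg (mem_range.mp hi).ne]
    ring
  rw [sum_range_succ, hterms, newtonTerm, if_pos rfl]
  push_cast at hcoeff
  linear_combination hcoeff

variable [LinearOrder K] [IsStrictOrderedRing K]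

lemma alternating_sum_mem_Icc {m : ℕ} {t : ℕ → K} (ht : ∀ i ≤ m, 0 ≤ t i)
    (hhalf : ∀ i < m, 2 * t (i + 1) ≤ t i) :
    ∑ i ∈ range (m + 1), (-1) ^ i * t i ∈ Set.Icc (t 0 / 2) (t 0) := by
  induction m generalizing t with
  | zero => simpa using ht 0 le_rfl
  | succ m ih =>
    obtain ⟨hlow, hup⟩ := ih (t := fun i => t (i + 1)) (fun i hi => ht _ (by omega))
      (fun i hi => hhalf _ (by omega))
    have hshift : ∑ i ∈ range (m + 1), (-1) ^ (i + 1) * t (i + 1) =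
        -∑ i ∈ range (m + 1), (-1) ^ i * t (i + 1) := by
      rw [← sum_neg_distrib]
      exact sum_congr rfl fun i _ => by ring
    have h01 := hhalf 0 m.succ_pos
    have h1 := ht 1 (by omega)
    rw [sum_range_succ', hshift]
    simp only [zero_add, pow_zero, one_mul] at hlow hup h01 ⊢
    constructor <;> linarith

variable {b : ℕ → K}

lemma four_pow_mul_le_of_hutchinson (hb : ∀ n, 0 < b n)
    (hhut : ∀ n, 4 * (b (n + 2) * b n) ≤ b (n + 1) ^ 2) (k : ℕ) :
    4 ^ k * (b 0 * b (k + 1)) ≤ b 1 * b k := by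
  induction k with
  | zero => simp [mul_comm]
  | succ k ih =>
    have hk := hb k
    have hk1 := hb (k + 1)
    have h0 := hb 0
    refine le_of_mul_le_mul_right ?_ hk
    calc 4 ^ (k + 1) * (b 0 * b (k + 2)) * b k
        = 4 ^ k * b 0 * (4 * (b (k + 2) * b k)) := by ring
      _ ≤ 4 ^ k * b 0 * b (k + 1) ^ 2 := by gcongr; exact hhut k
      _ = 4 ^ k * (b 0 * b (k + 1)) * b (k + 1) := by ring
      _ ≤ b 1 * b k * b (k + 1) := by gcongr
      _ = b 1 * b (k + 1) * b k := by ring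

lemma two_mul_add_two_le_four_pow (n : ℕ) : 2 * (n + 2) ≤ 4 ^ (n + 1) := by
  induction n with
  | zero => norm_num
  | succ n ih => rw [pow_succ]; omega

lemma two_mul_newtonTerm_succ_le (hb : ∀ n, 0 < b n)
    (hhut : ∀ n, 4 * (b (n + 2) * b n) ≤ b (n + 1) ^ 2) {p : ℕ → K} (hp1 : b 0 * p 1 = b 1)
    {n i : ℕ} (hi : i < n)
    (hp : ∀ k, k + 1 < n → 0 < p (k + 1) ∧ b 1 * p (k + 1) ≤ 2 * (b 0 * p (k + 2))) :
    2 * newtonTerm b p n (i + 1) ≤ newtonTerm b p n i := by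
  have h0 := hb 0
  have hi2 := hb (i + 2)
  have hdecay := four_pow_mul_le_of_hutchinson hb hhut (i + 1)
  refine le_of_mul_le_mul_left ?_ h0
  obtain ⟨k, rfl⟩ : ∃ k, n = i + 1 + k := ⟨n - (i + 1), by omega⟩
  rcases k with _ | k
  · have hpow : (2 * (i + 2) : K) ≤ 4 ^ (i + 1) := by exact_mod_cast two_mul_add_two_le_four_pow i
    rw [newtonTerm, newtonTerm, add_zero, if_pos rfl, if_neg i.lt_succ_self.ne,
      Nat.add_sub_cancel_left]
    calc b 0 * (2 * (b (i + 2) * ((i + 1 : ℕ) + 1))) = 2 * (i + 2) * (b 0 * b (i + 2)) := by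
          push_cast; ring
      _ ≤ 4 ^ (i + 1) * (b 0 * b (i + 2)) := by gcongr
      _ ≤ b 1 * b (i + 1) := hdecay
      _ = b 0 * (b (i + 1) * p 1) := by rw [← hp1]; ring
  · obtain ⟨hpos, hstep⟩ := hp k (by omega)
    have hi1 := hb (i + 1)
    have hfour : 4 * (b 0 * b (i + 2)) ≤ b 1 * b (i + 1) := by
      refine le_trans ?_ hdecay
      gcongr
      exact le_self_pow₀ (by norm_num) i.succ_ne_zero
    rw [newtonTerm, newtonTerm, if_neg (by omega), if_neg (by omega),
      show i + 1 + (k + 1) - (i + 1) = k + 1 by omega, show i + 1 + (k + 1) - i = k + 2 by omega]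
    calc b 0 * (2 * (b (i + 2) * p (k + 1))) = 4 * (b 0 * b (i + 2)) * p (k + 1) / 2 := by ring
      _ ≤ b 1 * b (i + 1) * p (k + 1) / 2 := by gcongr
      _ = b (i + 1) * (b 1 * p (k + 1)) / 2 := by ring
      _ ≤ b (i + 1) * (2 * (b 0 * p (k + 2))) / 2 := by gcongr
      _ = b 0 * (b (i + 1) * p (k + 2)) := by ring

lemma powerSum_pos_and_growth_of_newton (hb : ∀ n, 0 < b n)
    (hhut : ∀ n, 4 * (b (n + 2) * b n) ≤ b (n + 1) ^ 2) {p : ℕ → K}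
    (hnewton : ∀ n, b 0 * p (n + 1) = ∑ i ∈ range (n + 1), (-1) ^ i * newtonTerm b p n i) (n : ℕ) :
    0 < p (n + 1) ∧ b 1 * p (n + 1) ≤ 2 * (b 0 * p (n + 2)) := by
  have hp1 : b 0 * p 1 = b 1 := by simpa [newtonTerm] using hnewton 0
  induction n using Nat.strong_induction_on with
  | _ n ih =>
    have hpos : 0 < p (n + 1) := by
      refine pos_of_mul_pos_right ?_ (hb 0).le
      rcases n with _ | n
      · exact hp1 ▸ hb 1
      · obtain ⟨hprev, hgrowth⟩ := ih n n.lt_succ_self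
        have := mul_pos (hb 1) hprev
        rw [show n + 1 + 1 = n + 2 from rfl]
        linarith
    have hterm : ∀ i ≤ n + 1, 0 ≤ newtonTerm b p (n + 1) i := by
      intro i hi
      refine mul_nonneg (hb _).le ?_
      split_ifs with hin
      · positivity
      rcases Nat.eq_zero_or_pos i with rfl | hi0
      · exact hpos.le
      · obtain ⟨k, hk⟩ : ∃ k, n + 1 - i = k + 1 := ⟨n - i, by omega⟩
        exact hk ▸ (ih k (by omega)).1.le
    have hlow := (alternating_sum_mem_Icc hterm fun i hi =>
      two_mul_newtonTerm_succ_le hb hhut hp1 hi fun k hk => ih k (by omega)).1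
    rw [← hnewton] at hlow
    have hfirst : newtonTerm b p (n + 1) 0 = b 1 * p (n + 1) := by simp [newtonTerm]
    rw [show n + 1 + 1 = n + 2 from rfl] at hlow
    exact ⟨hpos, by linarith⟩

theorem coeff_powerSumSeries_nonneg_of_hutchinson (hb : ∀ n, 0 < b n)
    (hhut : ∀ n, 4 * (b (n + 2) * b n) ≤ b (n + 1) ^ 2) {h : K⟦X⟧}
    (hh : ∀ n, coeff n h = (-1) ^ n * b n) (n : ℕ) : 0 ≤ coeff n (powerSumSeries h) := by
  have h0 : constantCoeff h ≠ 0 := by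
    rw [← coeff_zero_eq_constantCoeff_apply, hh]
    simpa using (hb 0).ne'
  rcases n with _ | n
  · exact (coeff_zero_powerSumSeries h).ge
  · exact (powerSum_pos_and_growth_of_newton (p := fun k => coeff k (powerSumSeries h)) hb hhut
      (newton_identity hh h0) n).1.le

end Hutchinson

/-! ### Sums of formal power series on discs -/

lemma summable_mul_pow_of_norm_succ_le {𝕜 : Type*} [NormedField 𝕜] [CompleteSpace 𝕜] {a : ℕ → 𝕜}
    {C r : ℝ} (hr0 : 0 ≤ r) (hr1 : r < 1) (ha : ∀ n, ‖a (n + 1)‖ ≤ C * r ^ n * ‖a n‖) (w : 𝕜) :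
    Summable fun n => a n * w ^ n := by
  have hlim : Filter.Tendsto (fun n : ℕ => C * ‖w‖ * r ^ n) Filter.atTop (nhds 0) := by
    simpa using (tendsto_pow_atTop_nhds_zero_of_lt_one hr0 hr1).const_mul (C * ‖w‖)
  refine summable_of_ratio_norm_eventually_le (r := 1 / 2) (by norm_num) ?_
  filter_upwards [hlim.eventually_le_const (one_half_pos (α := ℝ))] with n hn
  rw [norm_mul, norm_mul, norm_pow, norm_pow]
  calc ‖a (n + 1)‖ * ‖w‖ ^ (n + 1) ≤ C * r ^ n * ‖a n‖ * ‖w‖ ^ (n + 1) := by gcongr; exact ha n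
    _ = C * ‖w‖ * r ^ n * (‖a n‖ * ‖w‖ ^ n) := by ring
    _ ≤ 1 / 2 * (‖a n‖ * ‖w‖ ^ n) := by gcongr

/-- The function `F` is the sum of the formal power series `f` on the open disc of radius `R`
about `0`. In contrast to `HasFPowerSeriesOnBall`, the series lives in the ring `ℂ⟦X⟧`, so that
identities of formal series can be transferred to their sums. -/
def HasSumOnBall (f : ℂ⟦X⟧) (F : ℂ → ℂ) (R : ℝ) : Prop :=
  ∀ w : ℂ, ‖w‖ < R → HasSum (fun n => coeff n f * w ^ n) (F w)

namespace HasSumOnBall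

variable {f g : ℂ⟦X⟧} {F F' : ℂ → ℂ} {R : ℝ}

protected lemma mul (hf : HasSumOnBall f F R) (hg : HasSumOnBall g F' R) :
    HasSumOnBall (f * g) (fun w => F w * F' w) R := by
  intro w hw
  have hfw := hf w hw
  have hgw := hg w hw
  have hsum := (summable_norm_sum_mul_antidiagonal_of_summable_norm
    hfw.summable.norm hgw.summable.norm).of_norm.hasSum
  rw [← tsum_mul_tsum_eq_tsum_sum_antidiagonal_of_summable_norm
    hfw.summable.norm hgw.summable.norm, hfw.tsum_eq, hgw.tsum_eq] at hsum
  refine hsum.congr_fun fun n => ?_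
  rw [coeff_mul, sum_mul]
  refine sum_congr rfl fun ⟨i, j⟩ hij => ?_
  rw [HasAntidiagonal.mem_antidiagonal] at hij
  rw [← hij, pow_add]
  ring

protected lemma neg (hf : HasSumOnBall f F R) : HasSumOnBall (-f) (fun w => -F w) R := by
  intro w hw
  simpa only [map_neg, neg_mul] using (hf w hw).neg

protected lemma one (R : ℝ) : HasSumOnBall 1 (fun _ => 1) R := by
  intro w _
  simpa using hasSum_single (f := fun n => coeff n (1 : ℂ⟦X⟧) * w ^ n) 0 fun n hn => by
    simp [coeff_one, hn]

lemma hasFPowerSeriesAt (hf : HasSumOnBall f F R) (hR : 0 < R) :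
    HasFPowerSeriesAt F (FormalMultilinearSeries.ofScalars ℂ fun n => coeff n f) 0 := by
  rw [hasFPowerSeriesAt_iff]
  filter_upwards [Metric.ball_mem_nhds (0 : ℂ) hR] with w hw
  simpa [FormalMultilinearSeries.coeff_ofScalars, mul_comm] using hf w (mem_ball_zero_iff.mp hw)

protected lemma unique (hf : HasSumOnBall f F R) (hg : HasSumOnBall g F R) (hR : 0 < R) :
    f = g := by
  have hseries := (hf.hasFPowerSeriesAt hR).eq_formalMultilinearSeries (hg.hasFPowerSeriesAt hR)
  ext n
  exact congrFun (FormalMultilinearSeries.ofScalars_series_injective (𝕜 := ℂ) ℂ hseries) n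

lemma exists_of_differentiableOn (hF : DifferentiableOn ℂ F (Metric.ball 0 R)) :
    ∃ f : ℂ⟦X⟧, HasSumOnBall f F R := by
  refine ⟨mk fun n => (n.factorial : ℂ)⁻¹ * iteratedDeriv n F 0, fun w hw => ?_⟩
  refine (Complex.hasSum_taylorSeries_on_ball hF (mem_ball_zero_iff.mpr hw)).congr_fun
    fun n => ?_
  simp only [coeff_mk, smul_eq_mul, sub_zero]
  ring

lemma norm_coeff_mul_pow_le (f : ℂ⟦X⟧) (n : ℕ) {w : ℂ} {r : ℝ} (hw : w ∈ Metric.ball 0 r) :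
    ‖coeff n f * w ^ n‖ ≤ ‖coeff n f * (r : ℂ) ^ n‖ := by
  have hwr : ‖w‖ ≤ ‖(r : ℂ)‖ := by
    rw [Complex.norm_real]
    exact (mem_ball_zero_iff.mp hw).le.trans (le_abs_self r)
  rw [norm_mul, norm_mul, norm_pow, norm_pow]
  gcongr

lemma summable_norm (hf : HasSumOnBall f F R) {r : ℝ} (hr0 : 0 ≤ r) (hr : r < R) :
    Summable fun n => ‖coeff n f * (r : ℂ) ^ n‖ :=
  (hf r (by rwa [Complex.norm_real, Real.norm_of_nonneg hr0])).summable.norm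

lemma eventuallyEq_tsum (hf : HasSumOnBall f F R) {w : ℂ} (hw : ‖w‖ < R) :
    F =ᶠ[nhds w] fun z => ∑' n, coeff n f * z ^ n := by
  filter_upwards [Metric.isOpen_ball.mem_nhds (mem_ball_zero_iff.mpr hw)] with z hz
  exact (hf z (mem_ball_zero_iff.mp hz)).tsum_eq.symm

lemma differentiableAt (hf : HasSumOnBall f F R) {w : ℂ} (hw : ‖w‖ < R) :
    DifferentiableAt ℂ F w := by
  obtain ⟨r, hwr, hrR⟩ := exists_between hw
  have hdiff := Complex.differentiableOn_tsum_of_summable_norm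
    (F := fun n z => coeff n f * z ^ n) (hf.summable_norm ((norm_nonneg w).trans hwr.le) hrR)
    (fun n => by fun_prop) Metric.isOpen_ball fun n z hz => norm_coeff_mul_pow_le f n hz
  exact (hf.eventuallyEq_tsum hw).differentiableAt_iff.mpr
    (hdiff.differentiableAt (Metric.isOpen_ball.mem_nhds (mem_ball_zero_iff.mpr hwr)))

protected lemma eulerDeriv (hf : HasSumOnBall f F R) :
    HasSumOnBall (eulerDeriv f) (fun w => w * deriv F w) R := by
  intro w hw
  obtain ⟨r, hwr, hrR⟩ := exists_between hw
  have hsum := (Complex.hasSum_deriv_of_summable_norm (F := fun n z => coeff n f * z ^ n)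
    (hf.summable_norm ((norm_nonneg w).trans hwr.le) hrR) (fun n => by fun_prop)
    Metric.isOpen_ball (fun n z hz => norm_coeff_mul_pow_le f n hz)
    (mem_ball_zero_iff.mpr hwr)).mul_left w
  rw [← (hf.eventuallyEq_tsum hw).deriv_eq] at hsum
  refine hsum.congr_fun fun n => ?_
  rw [coeff_eulerDeriv, deriv_const_mul_field, deriv_pow_field]
  cases n with
  | zero => simp
  | succ n => rw [Nat.add_sub_cancel]; ring

lemma constantCoeff_eq (hf : HasSumOnBall f F R) (hR : 0 < R) : constantCoeff f = F 0 := by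
  have h0 := hf 0 (by rwa [norm_zero])
  have hsingle := hasSum_single (f := fun n => coeff n f * (0 : ℂ) ^ n) 0 fun n hn => by simp [hn]
  simpa using hsingle.unique h0

protected lemma inv (hf : HasSumOnBall f F R) (hR : 0 < R) (hne : ∀ w, ‖w‖ < R → F w ≠ 0) :
    HasSumOnBall f⁻¹ (fun w => (F w)⁻¹) R := by
  obtain ⟨g, hg⟩ := exists_of_differentiableOn (F := fun w => (F w)⁻¹) (R := R) fun w hw =>
    have hw := mem_ball_zero_iff.mp hw
    ((hf.differentiableAt hw).inv (hne w hw)).differentiableWithinAt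
  have hgf : g * f = 1 := by
    refine (hg.mul hf).unique (fun w hw => ?_) hR
    simpa only [inv_mul_cancel₀ (hne w hw)] using HasSumOnBall.one R w hw
  have hf0 : constantCoeff f ≠ 0 := by
    rw [hf.constantCoeff_eq hR]
    exact hne 0 (by rwa [norm_zero])
  rwa [(PowerSeries.inv_eq_iff_mul_eq_one hf0).mpr hgf]

protected lemma powerSumSeries (hf : HasSumOnBall f F R) (hR : 0 < R)
    (hne : ∀ w, ‖w‖ < R → F w ≠ 0) :
    HasSumOnBall (powerSumSeries f) (fun w => -(w * logDeriv F w)) R := by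
  intro w hw
  have hval : -(w * logDeriv F w) = -(w * deriv F w) * (F w)⁻¹ := by
    rw [logDeriv_apply]
    ring
  simp only [hval]
  exact hf.eulerDeriv.neg.mul (hf.inv hR hne) w hw

lemma hasSum_re {f : ℝ⟦X⟧} (hf : HasSumOnBall (f.map Complex.ofRealHom) F R) {x : ℝ}
    (hx0 : 0 ≤ x) (hx : x < R) : HasSum (fun n => coeff n f * x ^ n) (F x).re := by
  have hsum := Complex.hasSum_re (hf x (by rwa [Complex.norm_real, Real.norm_of_nonneg hx0]))
  simpa [← Complex.ofReal_pow, ← Complex.ofReal_mul] using hsum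

lemma norm_le_of_coeff_nonneg {f : ℝ⟦X⟧} (hf : HasSumOnBall (f.map Complex.ofRealHom) F R)
    (hnonneg : ∀ n, 0 ≤ coeff n f) {w : ℂ} (hw : ‖w‖ < R) : ‖F w‖ ≤ (F (‖w‖ : ℝ)).re := by
  rw [← (hf w hw).tsum_eq]
  refine tsum_of_norm_bounded (hf.hasSum_re (norm_nonneg w) hw) fun n => ?_
  rw [coeff_map, norm_mul, norm_pow, Complex.ofRealHom_eq_coe, Complex.norm_real,
    Real.norm_of_nonneg (hnonneg n)]

end HasSumOnBall

lemma exists_first_zero {K : ℝ → ℝ} (hK : Continuous K) (h0 : 0 < K 0) {x : ℝ} (hx0 : 0 ≤ x)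
    (hx : K x ≤ 0) : ∃ y, 0 < y ∧ K y = 0 ∧ ∀ t, 0 ≤ t → t < y → 0 < K t := by
  set S : Set ℝ := Set.Ici 0 ∩ K ⁻¹' Set.Iic 0
  have hS : IsClosed S := isClosed_Ici.inter (isClosed_Iic.preimage hK)
  obtain ⟨⟨hy0, hKy⟩, hleast⟩ :=
    hS.isLeast_csInf ⟨x, hx0, hx⟩ ⟨0, fun t ht => ht.1⟩
  set y := sInf S
  obtain ⟨t, ht, hKt⟩ : ∃ t ∈ Set.Icc 0 y, K t = 0 :=
    intermediate_value_Icc' hy0 hK.continuousOn ⟨hKy, h0.le⟩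
  obtain rfl : y = t := le_antisymm (hleast ⟨ht.1, hKt.le⟩) ht.2
  refine ⟨y, hy0.lt_of_ne ?_, hKt, fun s hs hsy => ?_⟩
  · intro h
    rw [← h] at hKt
    exact h0.ne' hKt
  · by_contra! hKs
    exact hsy.not_ge (hleast ⟨hs, hKs⟩)

lemma pos_of_add_mul_deriv_pos {G : ℝ → ℝ} (hG : Differentiable ℝ G) (h0 : 0 < G 0) {β W : ℝ}
    (hβ : 0 < β) (hpos : ∀ x, 0 < x → x < W → 0 < β * G x + x * deriv G x) {x : ℝ}
    (hx0 : 0 ≤ x) (hxW : x ≤ W) : 0 < G x := by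
  rcases hx0.eq_or_lt with rfl | hx
  · exact h0
  have hmono : StrictMonoOn (fun x : ℝ => x ^ β * G x) (Set.Icc 0 W) := by
    refine strictMonoOn_of_deriv_pos (convex_Icc 0 W)
      ((Real.continuous_rpow_const hβ.le).mul hG.continuous).continuousOn fun y hy => ?_
    rw [interior_Icc] at hy
    have hderiv := (Real.hasDerivAt_rpow_const (p := β) (Or.inl hy.1.ne')).mul (hG y).hasDerivAt
    have hfactor : β * y ^ (β - 1) * G y + y ^ β * deriv G y =
        y ^ (β - 1) * (β * G y + y * deriv G y) := by
      have hpow : y ^ β = y ^ (β - 1) * y := by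
        rw [← Real.rpow_add_one hy.1.ne', sub_add_cancel]
      rw [hpow]
      ring
    rw [show deriv (fun x => x ^ β * G x) y = _ from hderiv.deriv, hfactor]
    exact mul_pos (Real.rpow_pos_of_pos hy.1 _) (hpos y hy.1 hy.2)
  have hlt := hmono ⟨le_rfl, hx.le.trans hxW⟩ ⟨hx.le, hxW⟩ hx
  simp only [Real.zero_rpow hβ.ne', zero_mul] at hlt
  exact (mul_pos_iff_of_pos_left (Real.rpow_pos_of_pos hx β)).mp hlt

lemma add_mul_deriv_eq {G : ℝ → ℝ} {x : ℝ} (hx : G x ≠ 0) (β : ℝ) :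
    β * G x + x * deriv G x = (β + x * logDeriv G x) * G x := by
  rw [logDeriv_apply]
  field_simp

/-! ### Entire functions whose power sums are nonnegative -/

section RealOnReals

variable {H : ℂ → ℂ} {G : ℝ → ℝ}

lemma hasDerivAt_of_ofReal_eq (hH : Differentiable ℂ H) (hHG : ∀ x : ℝ, H x = G x) (x : ℝ) :
    HasDerivAt G (deriv H x).re x := by
  simpa only [hHG, Complex.ofReal_re] using (hH x).hasDerivAt.real_of_complex

lemma deriv_ofReal_eq (hH : Differentiable ℂ H) (hHG : ∀ x : ℝ, H x = G x) (x : ℝ) :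
    deriv H x = deriv G x := by
  have hG := hasDerivAt_of_ofReal_eq hH hHG x
  have hcomp := (hH x).hasDerivAt.comp_ofReal
  simp only [hHG] at hcomp
  rw [hG.deriv]
  exact hcomp.unique hG.ofReal_comp

lemma logDeriv_ofReal_eq (hH : Differentiable ℂ H) (hHG : ∀ x : ℝ, H x = G x) (x : ℝ) :
    logDeriv H x = logDeriv G x := by
  rw [logDeriv_apply, logDeriv_apply, deriv_ofReal_eq hH hHG, hHG, Complex.ofReal_div]

lemma continuous_deriv_of_ofReal_eq (hH : Differentiable ℂ H) (hHG : ∀ x : ℝ, H x = G x) :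
    Continuous (deriv G) := by
  have hderiv : deriv G = fun x : ℝ => (deriv H x).re :=
    funext fun x => (hasDerivAt_of_ofReal_eq hH hHG x).deriv
  rw [hderiv]
  have hcont : Continuous (deriv H) := (hH.contDiff (n := 1)).continuous_deriv le_rfl
  exact Complex.continuous_re.comp (hcont.comp Complex.continuous_ofReal)

end RealOnReals

lemma exists_zero_of_min_norm {H : ℂ → ℂ} (hH : Continuous H) {w₀ : ℂ} (hw₀ : H w₀ = 0) :
    ∃ ζ, H ζ = 0 ∧ ‖ζ‖ ≤ ‖w₀‖ ∧ ∀ w, ‖w‖ < ‖ζ‖ → H w ≠ 0 := by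
  have hcompact : IsCompact (Metric.closedBall (0 : ℂ) ‖w₀‖ ∩ H ⁻¹' {0}) :=
    (isCompact_closedBall _ _).inter_right (isClosed_singleton.preimage hH)
  obtain ⟨ζ, ⟨hζ, hHζ⟩, hmin⟩ := hcompact.exists_isMinOn
    ⟨w₀, mem_closedBall_zero_iff.mpr le_rfl, hw₀⟩ continuous_norm.continuousOn
  have hζ := mem_closedBall_zero_iff.mp hζ
  refine ⟨ζ, hHζ, hζ, fun w hw hHw => hw.not_ge (hmin ⟨?_, hHw⟩)⟩
  exact mem_closedBall_zero_iff.mpr (hw.le.trans hζ)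

/-- The real power series `h` converges everywhere; its sum is `H` on `ℂ` and `G` on `ℝ`. -/
structure IsEntireSum (h : ℝ⟦X⟧) (H : ℂ → ℂ) (G : ℝ → ℝ) : Prop where
  hasSumOnBall : ∀ R, HasSumOnBall (h.map Complex.ofRealHom) H R
  ofReal_eq : ∀ x : ℝ, H x = G x

lemma isEntireSum_tsum {h : ℝ⟦X⟧} (hs : ∀ w : ℂ, Summable fun n => ((coeff n h : ℝ) : ℂ) * w ^ n) :
    IsEntireSum h (fun w => ∑' n, ((coeff n h : ℝ) : ℂ) * w ^ n)
      (fun x => ∑' n, coeff n h * x ^ n) where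
  hasSumOnBall _ w _ := by simpa only [coeff_map, Complex.ofRealHom_eq_coe] using (hs w).hasSum
  ofReal_eq x := by push_cast; rfl

namespace IsEntireSum

variable {h : ℝ⟦X⟧} {H : ℂ → ℂ} {G : ℝ → ℝ} (hh : IsEntireSum h H G)

include hh

protected lemma differentiable : Differentiable ℂ H := fun w =>
  (hh.hasSumOnBall (‖w‖ + 1)).differentiableAt (lt_add_one _)

lemma differentiable_real : Differentiable ℝ G := fun x =>
  (hasDerivAt_of_ofReal_eq hh.differentiable hh.ofReal_eq x).differentiableAt

lemma apply_zero : G 0 = constantCoeff h := by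
  have hconst := (hh.hasSumOnBall 1).constantCoeff_eq one_pos
  rw [constantCoeff_map, ← Complex.ofReal_zero, hh.ofReal_eq] at hconst
  exact (Complex.ofReal_injective hconst).symm

lemma hasSumOnBall_powerSumSeries (h0 : constantCoeff h ≠ 0) {R : ℝ} (hR : 0 < R)
    (hne : ∀ w, ‖w‖ < R → H w ≠ 0) :
    HasSumOnBall ((powerSumSeries h).map Complex.ofRealHom) (fun w => -(w * logDeriv H w)) R := by
  rw [← powerSumSeries_map _ h0]
  exact (hh.hasSumOnBall R).powerSumSeries hR hne

lemma neg_mul_logDeriv_ofReal (x : ℝ) : -(x * logDeriv H x) = (-(x * logDeriv G x) : ℝ) := by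
  rw [logDeriv_ofReal_eq hh.differentiable hh.ofReal_eq]
  push_cast
  rfl

lemma norm_mul_logDeriv_le (h0 : constantCoeff h ≠ 0) (hP : ∀ n, 0 ≤ coeff n (powerSumSeries h))
    {R : ℝ} (hne : ∀ w, ‖w‖ < R → H w ≠ 0) {w : ℂ} (hw : ‖w‖ < R) :
    ‖w * logDeriv H w‖ ≤ -(‖w‖ * logDeriv G ‖w‖) := by
  have hle := (hh.hasSumOnBall_powerSumSeries h0 ((norm_nonneg w).trans_lt hw)
    hne).norm_le_of_coeff_nonneg hP hw
  rwa [norm_neg, hh.neg_mul_logDeriv_ofReal, Complex.ofReal_re] at hle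

lemma coeff_powerSumSeries_mul_pow_le (h0 : constantCoeff h ≠ 0)
    (hP : ∀ n, 0 ≤ coeff n (powerSumSeries h)) {R : ℝ} (hne : ∀ w, ‖w‖ < R → H w ≠ 0) {x : ℝ}
    (hx0 : 0 ≤ x) (hx : x < R) (n : ℕ) :
    coeff n (powerSumSeries h) * x ^ n ≤ -(x * logDeriv G x) := by
  have hsum := (hh.hasSumOnBall_powerSumSeries h0 (hx0.trans_lt hx) hne).hasSum_re hx0 hx
  rw [hh.neg_mul_logDeriv_ofReal, Complex.ofReal_re] at hsum
  exact le_hasSum hsum n fun m _ => mul_nonneg (hP m) (pow_nonneg hx0 m)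

lemma apply_norm_le_norm (h0 : 0 < constantCoeff h) (hP : ∀ n, 0 ≤ coeff n (powerSumSeries h))
    {R : ℝ} (hne : ∀ w, ‖w‖ < R → H w ≠ 0) {w : ℂ} (hw : ‖w‖ < R) (hpos : 0 < G ‖w‖) :
    G ‖w‖ ≤ ‖H w‖ := by
  have hinv := (hh.hasSumOnBall R).inv ((norm_nonneg w).trans_lt hw) hne
  rw [map_inv _ h0.ne'] at hinv
  have hle := hinv.norm_le_of_coeff_nonneg (coeff_inv_nonneg h0 hP) hw
  rw [hh.ofReal_eq, ← Complex.ofReal_inv, Complex.ofReal_re, norm_inv] at hle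
  exact (inv_le_inv₀ (norm_pos_iff.mpr (hne w hw)) hpos).mp hle

-- A zero `ζ` of least modulus would violate the limit `G ‖ζ‖ ≤ ‖H ζ‖` of `apply_norm_le_norm`.
lemma ne_zero_of_forall_pos (h0 : 0 < constantCoeff h) (hP : ∀ n, 0 ≤ coeff n (powerSumSeries h))
    {W : ℝ} (hpos : ∀ x, 0 ≤ x → x ≤ W → 0 < G x) {w : ℂ} (hw : ‖w‖ ≤ W) : H w ≠ 0 := by
  intro hHw
  have hcont := hh.differentiable.continuous
  obtain ⟨ζ, hHζ, hζw, hne⟩ := exists_zero_of_min_norm hcont hHw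
  have hζW := hζw.trans hw
  have hζ : ‖ζ‖ ≠ 0 := by
    rw [norm_ne_zero_iff]
    rintro rfl
    rw [← Complex.ofReal_zero, hh.ofReal_eq, hh.apply_zero] at hHζ
    exact h0.ne' (Complex.ofReal_eq_zero.mp hHζ)
  have hclosed : IsClosed {z : ℂ | G ‖z‖ ≤ ‖H z‖} :=
    isClosed_le (hh.differentiable_real.continuous.comp continuous_norm) hcont.norm
  have hball : Metric.ball (0 : ℂ) ‖ζ‖ ⊆ {z : ℂ | G ‖z‖ ≤ ‖H z‖} := fun z hz =>
    have hz := mem_ball_zero_iff.mp hz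
    hh.apply_norm_le_norm h0 hP hne hz (hpos _ (norm_nonneg z) (hz.le.trans hζW))
  have hle : G ‖ζ‖ ≤ ‖H ζ‖ := by
    have hsub := hclosed.closure_subset_iff.mpr hball
    rw [closure_ball _ hζ] at hsub
    exact hsub (mem_closedBall_zero_iff.mpr le_rfl)
  rw [hHζ, norm_zero] at hle
  exact hle.not_gt (hpos _ (norm_nonneg ζ) hζW)

lemma exists_add_mul_deriv_nonpos (h0 : 0 < constantCoeff h)
    (hP : ∀ n, 0 ≤ coeff n (powerSumSeries h)) (hP0 : powerSumSeries h ≠ 0) {β : ℝ} (hβ : 0 < β) :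
    ∃ x, 0 < x ∧ β * G x + x * deriv G x ≤ 0 := by
  by_contra! hcon
  have hpos : ∀ x, 0 ≤ x → 0 < G x := fun x hx =>
    pos_of_add_mul_deriv_pos hh.differentiable_real (hh.apply_zero ▸ h0) hβ
      (fun t ht _ => hcon t ht) hx le_rfl
  have hne : ∀ w, H w ≠ 0 := fun w =>
    hh.ne_zero_of_forall_pos h0 hP (fun x hx _ => hpos x hx) le_rfl
  obtain ⟨n, hn⟩ : ∃ n, coeff n (powerSumSeries h) ≠ 0 := by
    by_contra! hzero
    exact hP0 (PowerSeries.ext hzero)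
  have hn0 : n ≠ 0 := by
    rintro rfl
    exact hn (coeff_zero_powerSumSeries h)
  obtain ⟨x, hx, hxβ⟩ := ((Filter.eventually_gt_atTop 0).and
    (((Filter.tendsto_pow_atTop hn0).const_mul_atTop
      ((hP n).lt_of_ne' hn)).eventually_ge_atTop β)).exists
  have hlog : β ≤ -(x * logDeriv G x) := hxβ.trans
    (hh.coeff_powerSumSeries_mul_pow_le h0.ne' hP (R := x + 1) (fun w _ => hne w) hx.le
      (lt_add_one x) n)
  have hxcon := hcon x hx
  rw [add_mul_deriv_eq (hpos x hx.le).ne', mul_pos_iff_of_pos_right (hpos x hx.le)] at hxcon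
  linarith

lemma exists_first_zero_add_mul_deriv (h0 : 0 < constantCoeff h)
    (hP : ∀ n, 0 ≤ coeff n (powerSumSeries h)) (hP0 : powerSumSeries h ≠ 0) {β : ℝ} (hβ : 0 < β) :
    ∃ W, 0 < W ∧ β * G W + W * deriv G W = 0 ∧
      ∀ x, 0 ≤ x → x < W → 0 < β * G x + x * deriv G x := by
  obtain ⟨x, hx, hKx⟩ := hh.exists_add_mul_deriv_nonpos h0 hP hP0 hβ
  have hG := hh.differentiable_real.continuous
  have hG' := continuous_deriv_of_ofReal_eq hh.differentiable hh.ofReal_eq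
  refine exists_first_zero (K := fun x => β * G x + x * deriv G x) (by fun_prop) ?_ hx.le hKx
  rw [hh.apply_zero, zero_mul, add_zero]
  exact mul_pos hβ h0

end IsEntireSum

/-! ### Radius of starlikeness -/

lemma radiusStarlike_eq {f : ℂ → ℂ} {α y : ℝ} (hy : 0 < y)
    (hlt : ∀ z : ℂ, 0 < ‖z‖ → ‖z‖ < y → α < (z * deriv f z / f z).re) {z₀ : ℂ} (hz₀ : ‖z₀‖ = y)
    (hle : (z₀ * deriv f z₀ / f z₀).re ≤ α) : radiusStarlike α f = y := by
  refine IsGreatest.csSup_eq ⟨⟨hy, hlt⟩, fun r ⟨_, hr⟩ => ?_⟩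
  by_contra! hyr
  exact hle.not_gt (hr z₀ (hz₀ ▸ hy) (hz₀ ▸ hyr))

section EvenFunction

variable {h : ℝ⟦X⟧} {H : ℂ → ℂ} {G : ℝ → ℝ}

lemma hasDerivAt_comp_sq {𝕜 : Type*} [NontriviallyNormedField 𝕜] {F : 𝕜 → 𝕜} {x : 𝕜}
    (hF : DifferentiableAt 𝕜 F (x ^ 2)) :
    HasDerivAt (fun x => F (x ^ 2)) (deriv F (x ^ 2) * (2 * x)) x := by
  have hsq : HasDerivAt (fun x : 𝕜 => x ^ 2) (2 * x) x := by simpa using hasDerivAt_pow 2 x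
  exact HasDerivAt.comp (h₂ := F) (h := fun x => x ^ 2) x hF.hasDerivAt hsq

lemma mul_deriv_comp_sq (hG : Differentiable ℝ G) (r : ℝ) :
    r * deriv (fun x => G (x ^ 2)) r = 2 * (r ^ 2 * deriv G (r ^ 2)) := by
  rw [(hasDerivAt_comp_sq (hG _)).deriv]
  ring

lemma mul_deriv_div_mul_comp_sq (hH : Differentiable ℂ H) {c z : ℂ} (hc : c ≠ 0) (hz : z ≠ 0)
    (hne : H (z ^ 2) ≠ 0) :
    z * deriv (fun z => z * c * H (z ^ 2)) z / (z * c * H (z ^ 2)) =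
      1 + 2 * (z ^ 2 * logDeriv H (z ^ 2)) := by
  have hderiv := ((hasDerivAt_id z).mul_const c).mul (hasDerivAt_comp_sq (hH _))
  rw [logDeriv_apply, show deriv (fun z => z * c * H (z ^ 2)) z = _ from hderiv.deriv]
  simp only [id]
  field_simp

namespace IsEntireSum

variable (hh : IsEntireSum h H G)

include hh

lemma re_mul_deriv_div_of_real {c : ℂ} (hc : c ≠ 0) {r : ℝ} (hr : r ≠ 0) (hG : G (r ^ 2) ≠ 0) :
    (r * deriv (fun z => z * c * H (z ^ 2)) r / (r * c * H (r ^ 2))).re =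
      1 + 2 * (r ^ 2 * logDeriv G (r ^ 2)) := by
  have hne : H ((r : ℂ) ^ 2) ≠ 0 := by
    rwa [← Complex.ofReal_pow, hh.ofReal_eq, Complex.ofReal_ne_zero]
  rw [mul_deriv_div_mul_comp_sq hh.differentiable hc (Complex.ofReal_ne_zero.mpr hr) hne,
    ← Complex.ofReal_pow, logDeriv_ofReal_eq hh.differentiable hh.ofReal_eq]
  norm_cast

lemma le_re_mul_deriv_div (h0 : constantCoeff h ≠ 0) (hP : ∀ n, 0 ≤ coeff n (powerSumSeries h))
    {R : ℝ} (hne : ∀ w, ‖w‖ < R → H w ≠ 0) {c z : ℂ} (hc : c ≠ 0) (hz : z ≠ 0)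
    (hzR : ‖z ^ 2‖ < R) :
    1 + 2 * (‖z ^ 2‖ * logDeriv G ‖z ^ 2‖) ≤
      (z * deriv (fun z => z * c * H (z ^ 2)) z / (z * c * H (z ^ 2))).re := by
  have hnorm := hh.norm_mul_logDeriv_le h0 hP hne hzR
  have hre := neg_le_of_abs_le (Complex.abs_re_le_norm (z ^ 2 * logDeriv H (z ^ 2)))
  rw [mul_deriv_div_mul_comp_sq hh.differentiable hc hz (hne _ hzR), Complex.add_re,
    Complex.one_re, ← Complex.ofReal_ofNat, Complex.re_ofReal_mul]
  linarith

theorem radiusStarlike_eq_first_root (h0 : 0 < constantCoeff h)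
    (hP : ∀ n, 0 ≤ coeff n (powerSumSeries h)) (hP0 : powerSumSeries h ≠ 0) {α : ℝ} (hα : α < 1)
    {c : ℂ} (hc : c ≠ 0) :
    ∃ y, IsLeast {r : ℝ | 0 < r ∧
        r * deriv (fun x => G (x ^ 2)) r - (α - 1) * G (r ^ 2) = 0} y ∧
      radiusStarlike α (fun z => z * c * H (z ^ 2)) = y := by
  obtain ⟨W, hW, hKW, hK⟩ :=
    hh.exists_first_zero_add_mul_deriv h0 hP hP0 (β := (1 - α) / 2) (by linarith)
  have hpos : ∀ x, 0 ≤ x → x ≤ W → 0 < G x := fun x =>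
    pos_of_add_mul_deriv_pos hh.differentiable_real (hh.apply_zero ▸ h0) (by linarith)
      fun x hx => hK x hx.le
  have hne : ∀ w : ℂ, ‖w‖ < W → H w ≠ 0 := fun w hw => hh.ne_zero_of_forall_pos h0 hP hpos hw.le
  have heq : ∀ r, r * deriv (fun x => G (x ^ 2)) r - (α - 1) * G (r ^ 2) =
      2 * ((1 - α) / 2 * G (r ^ 2) + r ^ 2 * deriv G (r ^ 2)) := fun r => by
    rw [mul_deriv_comp_sq hh.differentiable_real]
    ring
  have hy : 0 < √W := Real.sqrt_pos.mpr hW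
  have hyW : √W ^ 2 = W := Real.sq_sqrt hW.le
  refine ⟨√W, ⟨⟨hy, by rw [heq, hyW, hKW, mul_zero]⟩, fun r ⟨hr, hroot⟩ => ?_⟩,
    radiusStarlike_eq (z₀ := √W) hy (fun z hz hzy => ?_) ?_ ?_⟩
  · by_contra! hlt
    rw [heq] at hroot
    linarith [hK _ (sq_nonneg r) ((Real.lt_sqrt hr.le).mp hlt)]
  · have hzW : ‖z ^ 2‖ < W := norm_pow z 2 ▸ (Real.lt_sqrt hz.le).mp hzy
    have hGz := hpos _ (norm_nonneg _) hzW.le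
    have hKz := hK _ (norm_nonneg _) hzW
    rw [add_mul_deriv_eq hGz.ne', mul_pos_iff_of_pos_right hGz] at hKz
    linarith [hh.le_re_mul_deriv_div h0.ne' hP hne hc (norm_pos_iff.mp hz) hzW]
  · rw [Complex.norm_real, Real.norm_of_nonneg hy.le]
  · have hGW := (hpos W hW.le le_rfl).ne'
    rw [add_mul_deriv_eq hGW, mul_eq_zero_iff_right hGW] at hKW
    rw [hh.re_mul_deriv_div_of_real hc hy.ne' (hyW.symm ▸ hGW), hyW]
    linarith

end IsEntireSum

end EvenFunction

/-! ### The `q`-gamma function -/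

lemma summable_norm_neg_mul_pow {q : ℝ} (hq0 : 0 ≤ q) (hq1 : q < 1) (a : ℝ) :
    Summable fun k : ℕ => ‖-(a * q ^ k)‖ :=
  ((summable_geometric_of_lt_one hq0 hq1).mul_left a).neg.norm

lemma qPochInf_pos {a q : ℝ} (hq0 : 0 ≤ q) (hq1 : q < 1) (ha : a < 1) : 0 < qPochInf a q := by
  have hfactor : ∀ k : ℕ, 0 < 1 + -(a * q ^ k) := fun k => by
    have hle : a * q ^ k ≤ max a 0 * 1 := mul_le_mul (le_max_left a 0) (pow_le_one₀ hq0 hq1.le)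
      (pow_nonneg hq0 k) (le_max_right a 0)
    linarith [max_lt ha one_pos]
  have hne := tprod_one_add_ne_zero_of_summable (fun k => (hfactor k).ne')
    (summable_norm_neg_mul_pow hq0 hq1 a)
  simp only [← sub_eq_add_neg] at hfactor hne
  exact (tprod_nonneg fun k => (hfactor k).le).lt_of_ne' hne

lemma qPochInf_eq_mul {q : ℝ} (hq0 : 0 ≤ q) (hq1 : q < 1) (a : ℝ) :
    qPochInf a q = (1 - a) * qPochInf (a * q) q := by
  have hshift : ∀ k : ℕ, 1 - a * q ^ (k + 1) = 1 - a * q * q ^ k := fun k => by ring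
  have hmul : Multipliable fun k : ℕ => 1 - a * q ^ (k + 1) := by
    simp only [hshift, sub_eq_add_neg]
    exact multipliable_one_add_of_summable (summable_norm_neg_mul_pow hq0 hq1 (a * q))
  rw [qPochInf, tprod_eq_zero_mul' (f := fun k => 1 - a * q ^ k) hmul, pow_zero, mul_one,
    tprod_congr hshift, qPochInf]

/-- The finite `q`-Pochhammer symbol `(q^x; q)₂`, the factor relating `Γ_q(x + 2)` to `Γ_q(x)`. -/
noncomputable def qPochTwo (q x : ℝ) : ℝ := (1 - q ^ x) * (1 - q ^ (x + 1))

section QGamma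

variable {q x : ℝ} (hq0 : 0 < q) (hq1 : q < 1)

include hq0 hq1

lemma qGamma_pos (hx : 0 < x) : 0 < qGamma q x :=
  div_pos (mul_pos (qPochInf_pos hq0.le hq1 hq1) (Real.rpow_pos_of_pos (sub_pos.mpr hq1) _))
    (qPochInf_pos hq0.le hq1 (Real.rpow_lt_one hq0.le hq1 hx))

lemma qGamma_add_one (hx : 0 < x) : (1 - q) * qGamma q (x + 1) = (1 - q ^ x) * qGamma q x := by
  have hpow : (1 - q) ^ (1 - x) = (1 - q) * (1 - q) ^ (1 - (x + 1)) := by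
    rw [mul_comm, ← Real.rpow_add_one (sub_pos.mpr hq1).ne']
    ring_nf
  have hlt : ∀ {y : ℝ}, 0 < y → q ^ y < 1 := Real.rpow_lt_one hq0.le hq1
  have hx1 : 0 < x + 1 := by linarith
  have hfactor : 1 - q ^ x ≠ 0 := (sub_pos.mpr (hlt hx)).ne'
  have hpoch := (qPochInf_pos hq0.le hq1 (hlt hx1)).ne'
  rw [qGamma, qGamma, qPochInf_eq_mul hq0.le hq1 (q ^ x), ← Real.rpow_add_one hq0.ne', hpow]
  field_simp

lemma qGamma_add_two (hx : 0 < x) :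
    (1 - q) ^ 2 * qGamma q (x + 2) = qPochTwo q x * qGamma q x := by
  have hfirst := qGamma_add_one hq0 hq1 hx
  have hsecond := qGamma_add_one hq0 hq1 (x := x + 1) (by linarith)
  rw [add_assoc, one_add_one_eq_two] at hsecond
  rw [qPochTwo]
  linear_combination (1 - q) * hsecond + (1 - q ^ (x + 1)) * hfirst

lemma qPochTwo_pos (hx : 0 < x) : 0 < qPochTwo q x :=
  mul_pos (sub_pos.mpr (Real.rpow_lt_one hq0.le hq1 hx))
    (sub_pos.mpr (Real.rpow_lt_one hq0.le hq1 (by linarith)))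

lemma qPochTwo_le_qPochTwo (hx : 0 < x) {y : ℝ} (hxy : x ≤ y) : qPochTwo q x ≤ qPochTwo q y := by
  have hanti : ∀ {s t : ℝ}, s ≤ t → q ^ t ≤ q ^ s := Real.rpow_le_rpow_of_exponent_ge hq0 hq1.le
  have hlt : ∀ {s : ℝ}, 0 < s → q ^ s < 1 := Real.rpow_lt_one hq0.le hq1
  exact mul_le_mul (sub_le_sub_left (hanti hxy) 1) (sub_le_sub_left (hanti (by linarith)) 1)
    (sub_pos.mpr (hlt (by linarith))).le (sub_pos.mpr (hlt (by linarith))).le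

lemma qPochTwo_le_one (hx : 0 < x) : qPochTwo q x ≤ 1 := by
  have hlt : ∀ {s : ℝ}, 0 < s → q ^ s < 1 := Real.rpow_lt_one hq0.le hq1
  exact mul_le_one₀ (sub_le_self _ (Real.rpow_pos_of_pos hq0 _).le)
    (sub_pos.mpr (hlt (by linarith))).le (sub_le_self _ (Real.rpow_pos_of_pos hq0 _).le)

end QGamma

lemma qPochTwo_natCast (q : ℝ) (k : ℕ) :
    qPochTwo q k = (1 - q ^ k) * (1 - q ^ (k + 1)) := by
  rw [qPochTwo, ← Nat.cast_add_one, Real.rpow_natCast, Real.rpow_natCast]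

/-! ### The `q`-Mittag-Leffler function -/

/-- The absolute value of the coefficient of `z²ⁿ` in `λ_{γ,σ}(z; q)`. -/
noncomputable def absCoeff (γ σ q : ℝ) (n : ℕ) : ℝ :=
  σ ^ (2 * n) * q ^ (n * (n - 1)) / qGamma q (2 * n + γ + 1)

/-- The formal power series `h` with `λ_{γ,σ}(z; q) = h(z²)`. -/
noncomputable def qMLSeries (γ σ q : ℝ) : ℝ⟦X⟧ := mk fun n => (-1) ^ n * absCoeff γ σ q n

lemma coeff_qMLSeries (γ σ q : ℝ) (n : ℕ) :
    coeff n (qMLSeries γ σ q) = (-1) ^ n * absCoeff γ σ q n :=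
  coeff_mk _ _

section Coefficients

variable {γ σ q : ℝ} (hq0 : 0 < q) (hq1 : q < 1) (hγ : -1 < γ)

include hγ in
lemma two_mul_add_add_one_pos (n : ℕ) : 0 < 2 * (n : ℝ) + γ + 1 := by
  linarith [n.cast_nonneg (α := ℝ)]

include hq0 hq1 hγ

lemma absCoeff_pos (hσ : σ ≠ 0) (n : ℕ) : 0 < absCoeff γ σ q n := by
  have hΓ := qGamma_pos hq0 hq1 (two_mul_add_add_one_pos hγ n)
  rw [absCoeff, pow_mul]
  positivity

lemma absCoeff_succ_mul_qPochTwo (n : ℕ) :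
    absCoeff γ σ q (n + 1) * qPochTwo q (2 * n + γ + 1) =
      σ ^ 2 * (1 - q) ^ 2 * (q ^ 2) ^ n * absCoeff γ σ q n := by
  have hx := two_mul_add_add_one_pos hγ n
  have hΓ := (qGamma_pos hq0 hq1 hx).ne'
  have hΓ' := (qGamma_pos hq0 hq1 (x := 2 * n + γ + 1 + 2) (by linarith)).ne'
  have hrec := qGamma_add_two hq0 hq1 hx
  have hexp : (n + 1) * (n + 1 - 1) = n * (n - 1) + 2 * n := by
    cases n with
    | zero => rfl
    | succ n => simp only [Nat.add_sub_cancel]; ring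
  have harg : 2 * ((n + 1 : ℕ) : ℝ) + γ + 1 = 2 * n + γ + 1 + 2 := by
    push_cast
    ring
  rw [absCoeff, absCoeff, hexp, harg, pow_add, pow_mul q 2 n]
  field_simp
  linear_combination -σ ^ (2 * (n + 1)) * hrec

lemma coeff_qMLSeries_succ_mul_qPochTwo (n : ℕ) :
    coeff (n + 1) (qMLSeries γ σ q) * qPochTwo q (2 * n + γ + 1) =
      -(σ ^ 2 * (1 - q) ^ 2 * (q ^ 2) ^ n * coeff n (qMLSeries γ σ q)) := by
  rw [coeff_qMLSeries, coeff_qMLSeries, mul_assoc, absCoeff_succ_mul_qPochTwo hq0 hq1 hγ]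
  ring

lemma constantCoeff_qMLSeries_pos (hσ : σ ≠ 0) : 0 < constantCoeff (qMLSeries γ σ q) := by
  rw [← coeff_zero_eq_constantCoeff_apply, coeff_qMLSeries, pow_zero, one_mul]
  exact absCoeff_pos hq0 hq1 hγ hσ 0

lemma powerSumSeries_qMLSeries_ne_zero (hσ : σ ≠ 0) : powerSumSeries (qMLSeries γ σ q) ≠ 0 := by
  refine powerSumSeries_ne_zero (constantCoeff_qMLSeries_pos hq0 hq1 hγ hσ).ne' ?_
  rw [coeff_qMLSeries]
  exact mul_ne_zero (pow_ne_zero _ (by norm_num)) (absCoeff_pos hq0 hq1 hγ hσ 1).ne'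

lemma hutchinson_absCoeff (hσ : σ ≠ 0) (hq : q ≤ 1 / 2) (n : ℕ) :
    4 * (absCoeff γ σ q (n + 2) * absCoeff γ σ q n) ≤ absCoeff γ σ q (n + 1) ^ 2 := by
  have hx := two_mul_add_add_one_pos hγ n
  have hD := qPochTwo_pos hq0 hq1 hx
  have hDle : qPochTwo q (2 * n + γ + 1) ≤ qPochTwo q (2 * (n + 1 : ℕ) + γ + 1) :=
    qPochTwo_le_qPochTwo hq0 hq1 hx (by push_cast; linarith)
  have hrec := absCoeff_succ_mul_qPochTwo (σ := σ) hq0 hq1 hγ n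
  have hrec' := absCoeff_succ_mul_qPochTwo (σ := σ) hq0 hq1 hγ (n + 1)
  set D := qPochTwo q (2 * n + γ + 1)
  set D' := qPochTwo q (2 * (n + 1 : ℕ) + γ + 1)
  set T := σ ^ 2 * (1 - q) ^ 2 * (q ^ 2) ^ n with hT
  have hTpos : 0 < T := by
    have := sub_pos.mpr hq1
    positivity
  have hq4 : 4 * q ^ 2 ≤ 1 := by nlinarith
  rw [pow_succ (q ^ 2) n, ← mul_assoc, ← hT] at hrec'
  refine le_of_mul_le_mul_right ?_ (mul_pos hTpos (hD.trans_le hDle))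
  calc 4 * (absCoeff γ σ q (n + 2) * absCoeff γ σ q n) * (T * D')
      = 4 * (absCoeff γ σ q (n + 2) * D') * (T * absCoeff γ σ q n) := by ring
    _ = 4 * q ^ 2 * (T * absCoeff γ σ q (n + 1) ^ 2 * D) := by rw [hrec', ← hrec]; ring
    _ ≤ 1 * (T * absCoeff γ σ q (n + 1) ^ 2 * D') := by gcongr
    _ = absCoeff γ σ q (n + 1) ^ 2 * (T * D') := by ring

end Coefficients

section PowerSums

variable {γ σ q : ℝ} (hq0 : 0 < q) (hq1 : q < 1)

include hq0 hq1

lemma coeff_powerSumSeries_qMLSeries_nonneg_of_qPochTwo_eq (hγ : -1 < γ) (hσ : σ ≠ 0) {d : ℝ}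
    (hd : 0 ≤ d) (hdq : d * q ^ 2 < 1) (heq : ∀ n : ℕ, qPochTwo q (2 * n + γ + 1) =
      (1 - (q ^ 2) ^ (n + 1)) * (1 - d * (q ^ 2) ^ (n + 1))) (n : ℕ) :
    0 ≤ coeff n (powerSumSeries (qMLSeries γ σ q)) := by
  refine coeff_powerSumSeries_nonneg_of_qRecurrence (sq_nonneg q) (pow_lt_one₀ hq0.le hq1
    two_ne_zero) hd hdq (t := σ ^ 2 * (1 - q) ^ 2) (by positivity)
    (constantCoeff_qMLSeries_pos hq0 hq1 hγ hσ).ne' (fun n => ?_) n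
  rw [← heq]
  exact coeff_qMLSeries_succ_mul_qPochTwo hq0 hq1 hγ n

lemma coeff_powerSumSeries_qMLSeries_zero_nonneg (hσ : σ ≠ 0) (n : ℕ) :
    0 ≤ coeff n (powerSumSeries (qMLSeries 0 σ q)) := by
  refine coeff_powerSumSeries_qMLSeries_nonneg_of_qPochTwo_eq hq0 hq1 (by norm_num) hσ
    (inv_nonneg.mpr hq0.le) ?_ (fun n => ?_) n
  · rwa [sq, inv_mul_cancel_left₀ hq0.ne']
  · have hcast : 2 * (n : ℝ) + 0 + 1 = (2 * n + 1 : ℕ) := by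
      push_cast
      ring
    have hinv : q⁻¹ * (q ^ 2) ^ (n + 1) = q ^ (2 * n + 1) := by
      field_simp
      ring
    rw [hcast, qPochTwo_natCast, hinv]
    ring

lemma coeff_powerSumSeries_qMLSeries_one_nonneg (hσ : σ ≠ 0) (n : ℕ) :
    0 ≤ coeff n (powerSumSeries (qMLSeries 1 σ q)) := by
  refine coeff_powerSumSeries_qMLSeries_nonneg_of_qPochTwo_eq hq0 hq1 (by norm_num) hσ
    hq0.le ?_ (fun n => ?_) n
  · rw [← pow_succ']
    exact pow_lt_one₀ hq0.le hq1 three_ne_zero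
  · have hcast : 2 * (n : ℝ) + 1 + 1 = (2 * n + 2 : ℕ) := by
      push_cast
      ring
    rw [hcast, qPochTwo_natCast]
    ring

lemma coeff_powerSumSeries_qMLSeries_nonneg (hσ : σ ≠ 0)
    (hγ : γ = 0 ∨ γ = 1 ∨ -1 < γ ∧ q ≤ 1 / 2) (n : ℕ) :
    0 ≤ coeff n (powerSumSeries (qMLSeries γ σ q)) := by
  rcases hγ with rfl | rfl | ⟨hγ, hq⟩
  · exact coeff_powerSumSeries_qMLSeries_zero_nonneg hq0 hq1 hσ n
  · exact coeff_powerSumSeries_qMLSeries_one_nonneg hq0 hq1 hσ n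
  · exact coeff_powerSumSeries_nonneg_of_hutchinson (absCoeff_pos hq0 hq1 hγ hσ)
      (hutchinson_absCoeff hq0 hq1 hγ hσ hq) (coeff_qMLSeries γ σ q) n

lemma eq_zero_or_eq_one_or_le_half_of_condR (hR : condR q γ) :
    γ = 0 ∨ γ = 1 ∨ -1 < γ ∧ q ≤ 1 / 2 := by
  rcases hR with (h | h) | ⟨⟨hγ, -⟩, -, hlt⟩
  · exact Or.inl h
  · exact Or.inr (Or.inl h)
  refine Or.inr (Or.inr ⟨by linarith, ?_⟩)
  have hle := qPochTwo_le_one hq0 hq1 (x := γ + 1) (by linarith)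
  have hmul : q⁻¹ * (1 - q) * qPochTwo q (γ + 1) ≤ q⁻¹ * (1 - q) :=
    mul_le_of_le_one_right (mul_nonneg (inv_nonneg.mpr hq0.le) (sub_pos.mpr hq1).le) hle
  rw [qPochTwo, add_assoc, one_add_one_eq_two, ← mul_assoc] at hmul
  have hone : 1 < q⁻¹ * (1 - q) := hlt.trans_le hmul
  rw [lt_inv_mul_iff₀ hq0] at hone
  linarith

end PowerSums

lemma norm_coeff_qMLSeries_succ_le {γ σ q : ℝ} (hq0 : 0 < q) (hq1 : q < 1) (hγ : -1 < γ) (n : ℕ) :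
    ‖coeff (n + 1) (qMLSeries γ σ q)‖ ≤
      σ ^ 2 * (1 - q) ^ 2 / qPochTwo q (γ + 1) * (q ^ 2) ^ n * ‖coeff n (qMLSeries γ σ q)‖ := by
  have hD := qPochTwo_pos hq0 hq1 (x := γ + 1) (by linarith)
  have hDle : qPochTwo q (γ + 1) ≤ qPochTwo q (2 * n + γ + 1) :=
    qPochTwo_le_qPochTwo hq0 hq1 (by linarith) (by linarith [n.cast_nonneg (α := ℝ)])
  have hrec := congrArg norm (coeff_qMLSeries_succ_mul_qPochTwo (σ := σ) hq0 hq1 hγ n)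
  rw [norm_neg, norm_mul, Real.norm_of_nonneg (hD.le.trans hDle), norm_mul,
    Real.norm_of_nonneg (r := _ * _) (by positivity)] at hrec
  refine le_of_mul_le_mul_right ?_ hD
  calc ‖coeff (n + 1) (qMLSeries γ σ q)‖ * qPochTwo q (γ + 1)
      ≤ ‖coeff (n + 1) (qMLSeries γ σ q)‖ * qPochTwo q (2 * n + γ + 1) := by gcongr
    _ = σ ^ 2 * (1 - q) ^ 2 * (q ^ 2) ^ n * ‖coeff n (qMLSeries γ σ q)‖ := hrec
    _ = _ := by field_simp

lemma isEntireSum_qMLSeries {γ σ q : ℝ} (hq0 : 0 < q) (hq1 : q < 1) (hγ : -1 < γ) :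
    IsEntireSum (qMLSeries γ σ q) (fun w => ∑' n, ((coeff n (qMLSeries γ σ q) : ℝ) : ℂ) * w ^ n)
      (fun x => ∑' n, coeff n (qMLSeries γ σ q) * x ^ n) := by
  refine isEntireSum_tsum (summable_mul_pow_of_norm_succ_le
    (C := σ ^ 2 * (1 - q) ^ 2 / qPochTwo q (γ + 1)) (sq_nonneg q)
    (pow_lt_one₀ hq0.le hq1 two_ne_zero) fun n => ?_)
  simpa only [Complex.norm_real] using norm_coeff_qMLSeries_succ_le hq0 hq1 hγ n

lemma qMLR_eq_tsum_sq (γ σ q : ℝ) :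
    qMLR γ σ q = fun x => ∑' n, coeff n (qMLSeries γ σ q) * (x ^ 2) ^ n := by
  ext x
  simp only [qMLR, coeff_qMLSeries, absCoeff, pow_mul, mul_div_assoc, mul_assoc]

lemma gML_eq_tsum_sq (γ σ q : ℝ) :
    gML γ σ q = fun z => z * (qGamma q (γ + 1) : ℂ) *
      ∑' n, ((coeff n (qMLSeries γ σ q) : ℝ) : ℂ) * (z ^ 2) ^ n := by
  ext z
  simp only [gML, qML, coeff_qMLSeries, absCoeff, pow_mul, mul_div_assoc, mul_assoc]

end QMittagLeffler

open QMittagLeffler in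
theorem stmt7_general {q σ γ α : ℝ} (hq0 : 0 < q) (hq1 : q < 1) (hσ : σ ≠ 0)
    (hγ : γ = 0 ∨ γ = 1 ∨ -1 < γ ∧ q ≤ 1 / 2) (hα : α < 1) :
    ∃ y : ℝ,
      IsLeast {r : ℝ | 0 < r ∧
        r * deriv (qMLR γ σ q) r - (α - 1) * qMLR γ σ q r = 0} y ∧
      radiusStarlike α (gML γ σ q) = y := by
  have hγ1 : -1 < γ := by rcases hγ with rfl | rfl | ⟨hγ, -⟩ <;> linarith
  have hΓ : (qGamma q (γ + 1) : ℂ) ≠ 0 :=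
    Complex.ofReal_ne_zero.mpr (qGamma_pos hq0 hq1 (by linarith)).ne'
  rw [qMLR_eq_tsum_sq, gML_eq_tsum_sq]
  exact (isEntireSum_qMLSeries hq0 hq1 hγ1).radiusStarlike_eq_first_root
    (constantCoeff_qMLSeries_pos hq0 hq1 hγ1 hσ)
    (coeff_powerSumSeries_qMLSeries_nonneg hq0 hq1 hσ hγ)
    (powerSumSeries_qMLSeries_ne_zero hq0 hq1 hγ1 hσ) hα hΓ

theorem stmt7 (q σ γ : ℝ) (hq0 : 0 < q) (hq1 : q < 1) (hσ : 0 < σ)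
    (hγ0 : 0 ≤ γ) (hγ2 : γ < 2) (hR : condR q γ)
    (α : ℝ) (hα0 : 0 ≤ α) (hα1 : α < 1) :
    ∃ y : ℝ,
      IsLeast {r : ℝ | 0 < r ∧
        r * deriv (qMLR γ σ q) r - (α - 1) * qMLR γ σ q r = 0} y ∧
      radiusStarlike α (gML γ σ q) = y :=
  stmt7_general hq0 hq1 hσ.ne' (QMittagLeffler.eq_zero_or_eq_one_or_le_half_of_condR hq0 hq1 hR) hα1
end
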